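/- Let T be a thick positive theory and q a global A-Ls-invariant type. For any Morley sequence (a_i)_{i<δ} in q over A: (i) for all i < δ, a_i ≡^Ls_{A a_{<i}} α, where α ⊨ q; (ii) (a_i)_{i<δ} is A-indiscernible. -/

import Mathlib

/-!
Proof idea. Write `a_i` for the Morley sequence and `α_i` for the realisation of the tensor power of
`q` to which it is Lascar equivalent over `A`.

*Finite parts.* The characterisation of the tensor power says that a tuple is Lascar equivalent to
`(α_0, …, α_n)` over a base exactly when each entry is Lascar equivalent to `q` over the base and
the preceding entries. Applied to finite subsequences of `a` it gives `MorleyCtx.ls_finite` (the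
first claim over finitely many predecessors) and `MorleyCtx.ls_tensor`, and hence that finite
subsequences of the same length have the same type, which is the indiscernibility of `a` over `A`
(`MorleyCtx.indisc`).

*The first claim for infinite initial segments.* Since `q` is Lascar-invariant, the sequence `a`
followed by `q` still has the same finite types as `a` (`MorleyCtx.pSeqOn_withQ`). On the other
hand, the order `{d | d < i}` carries a sequence with the same finite types as `a` that can be
prolonged by `n` further terms: if infinitely many `d < i` are finitely far from `i`, the order type
`{d | d < i} + n` embeds into `{d | d < i}` (`exists_shift`), and otherwise there is enough room
below `i` to use terms of `α` (`MorleyCtx.exists_pSeqOn_of_finite`). By compactness there is a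
prolongation by `ω` terms (`MorleyCtx.exists_pSeqOn_omega`), and by homogeneity of the big monster
it can be moved so that it consists of `a_{<i}`, then `a_i`, then `q`, and then further terms
(`MorleyCtx.exists_move`). The terms from `a_i` on are indiscernible over `A a_{<i}`, so `a_i` and
`q` have the same Lascar strong type over `A a_{<i}` (`MorleyCtx.ls_infinite`).

*Other realisations of `q`.* They are conjugate to `q` over the small monster
(`MorleyCtx.ls_all_of_eqTp`). If the cardinality of the small monster lies below its own saturation
degree, the embedding into the big monster is onto (`surjective_of_small`), which covers the
degenerate cardinal arithmetic.
-/

/-!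
A self-contained formalisation of the basic framework of positive logic
(Ben Yaacov–Poizat style), following Dobrowolski–Kamsma,
"Kim-independence in positive logic".

We work with a fixed language `L` (in universe 0).  Positive existential
formulas, h-inductive sentences, positive theories, homomorphisms,
immersions, existentially closed models, monster models, indiscernible
sequences, thickness, Lascar strong types, global Lascar-invariant types
(presented via realisations in a bigger monster model), Morley sequences,
Kim-dividing and the related independence relations are all defined below.
-/

open FirstOrder Cardinal

namespace PosLog

/-- Positive existential formulas over the language `L`, with free variables
indexed by `α` and `n` (de Bruijn) quantifiable variables. -/
inductive PEFormula (L : FirstOrder.Language.{0, 0}) (α : Type) : ℕ → Type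
  | top {n : ℕ} : PEFormula L α n
  | bot {n : ℕ} : PEFormula L α n
  | equal {n : ℕ} (t₁ t₂ : L.Term (α ⊕ Fin n)) : PEFormula L α n
  | rel {n k : ℕ} (R : L.Relations k) (ts : Fin k → L.Term (α ⊕ Fin n)) : PEFormula L α n
  | and {n : ℕ} (f g : PEFormula L α n) : PEFormula L α n
  | or {n : ℕ} (f g : PEFormula L α n) : PEFormula L α n
  | ex {n : ℕ} (f : PEFormula L α (n + 1)) : PEFormula L α n

/-- Realisation (satisfaction) of a positive existential formula in an
`L`-structure `M`, under a valuation of the free and bound variables. -/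
def PEFormula.Realize {L : FirstOrder.Language.{0, 0}} {M : Type} [L.Structure M] {α : Type} :
    ∀ {n : ℕ}, PEFormula L α n → (α → M) → (Fin n → M) → Prop
  | _, PEFormula.top, _, _ => True
  | _, PEFormula.bot, _, _ => False
  | _, PEFormula.equal t₁ t₂, v, xs => t₁.realize (Sum.elim v xs) = t₂.realize (Sum.elim v xs)
  | _, PEFormula.rel R ts, v, xs =>
      Language.Structure.RelMap R fun i => (ts i).realize (Sum.elim v xs)
  | _, PEFormula.and f g, v, xs => f.Realize v xs ∧ g.Realize v xs
  | _, PEFormula.or f g, v, xs => f.Realize v xs ∨ g.Realize v xs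
  | _, PEFormula.ex f, v, xs => ∃ m, f.Realize v (Fin.snoc xs m)

/-- Satisfaction of a positive existential formula without quantifiable
variables, under a valuation `v` of its free variables. -/
def Sat {L : FirstOrder.Language.{0, 0}} {M : Type} [L.Structure M] {α : Type} (φ : PEFormula L α 0) (v : α → M) : Prop :=
  φ.Realize v fun i => i.elim0

/-- An h-inductive sentence `∀ x (φ(x) → ψ(x))`, where `φ` and `ψ` are
positive existential. A positive theory is a set of h-inductive sentences. -/
structure HSentence (L : FirstOrder.Language.{0, 0}) where
  n : ℕ
  hyp : PEFormula L Empty n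
  concl : PEFormula L Empty n

/-- Satisfaction of an h-inductive sentence in a structure. -/
def HSentence.Holds {L : FirstOrder.Language.{0, 0}} (σ : HSentence L) (M : Type) [L.Structure M] : Prop :=
  ∀ xs : Fin σ.n → M, σ.hyp.Realize Empty.elim xs → σ.concl.Realize Empty.elim xs

/-- `M` is a model of the positive theory `T`. -/
def ModelsTheory {L : FirstOrder.Language.{0, 0}} (T : Set (HSentence L)) (M : Type) [L.Structure M] : Prop :=
  ∀ σ ∈ T, σ.Holds M

/-- A map between `L`-structures is a homomorphism when it preserves
(positive existential) formulas. -/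
def IsHomMap (L : FirstOrder.Language.{0, 0}) {M N : Type} [L.Structure M] [L.Structure N] (h : M → N) : Prop :=
  ∀ {α : Type} (φ : PEFormula L α 0) (v : α → M), Sat φ v → Sat φ (h ∘ v)

/-- A homomorphism is an immersion when it moreover reflects positive
existential formulas. -/
def IsImmersionMap (L : FirstOrder.Language.{0, 0}) {M N : Type} [L.Structure M] [L.Structure N] (h : M → N) : Prop :=
  IsHomMap L h ∧ ∀ {α : Type} (φ : PEFormula L α 0) (v : α → M), Sat φ (h ∘ v) → Sat φ v

/-- A bundled `L`-structure. -/
structure PreModel (L : FirstOrder.Language.{0, 0}) where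
  carrier : Type
  str : L.Structure carrier

attribute [instance] PreModel.str

/-- A bundled structure is a model of `T`. -/
def PreModel.IsModelOf {L : FirstOrder.Language.{0, 0}} (N : PreModel L) (T : Set (HSentence L)) : Prop :=
  ModelsTheory T N.carrier

/-- `M` is an existentially closed (e.c.) model of `T`: it is a model of `T`
and every homomorphism from `M` into a model of `T` is an immersion. -/
def IsECModelOf {L : FirstOrder.Language.{0, 0}} (T : Set (HSentence L)) (M : Type) [L.Structure M] : Prop :=
  ModelsTheory T M ∧
    ∀ (N : PreModel L) (h : M → N.carrier), N.IsModelOf T → IsHomMap L h → IsImmersionMap L h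

/-- The theory `T` has the joint embedding property. -/
def HasJEP {L : FirstOrder.Language.{0, 0}} (T : Set (HSentence L)) : Prop :=
  ∀ M₁ M₂ : PreModel L, M₁.IsModelOf T → M₂.IsModelOf T →
    ∃ (N : PreModel L) (f : M₁.carrier → N.carrier) (g : M₂.carrier → N.carrier),
      N.IsModelOf T ∧ IsHomMap L f ∧ IsHomMap L g

/-- An automorphism of an `L`-structure: a bijection which is a homomorphism
in both directions. -/
def IsAuto (L : FirstOrder.Language.{0, 0}) {M : Type} [L.Structure M] (f : M ≃ M) : Prop :=
  IsHomMap L (f : M → M) ∧ IsHomMap L (f.symm : M → M)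

/-- Two `α`-tuples have the same (positive existential) type over the
parameter set `A`; written `a ≡_A b`. -/
def EqTp (L : FirstOrder.Language.{0, 0}) {M : Type} [L.Structure M] (A : Set M) {α : Type} (a b : α → M) : Prop :=
  ∀ φ : PEFormula L (α ⊕ ↥A) 0,
    Sat φ (Sum.elim a Subtype.val) ↔ Sat φ (Sum.elim b Subtype.val)

/-- One tuple realizes (all formulas of) the type of another tuple over `A`. -/
def RealizesTpOver (L : FirstOrder.Language.{0, 0}) {M : Type} [L.Structure M] (A : Set M) {α : Type} (a b : α → M) : Prop :=
  ∀ φ : PEFormula L (α ⊕ ↥A) 0,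
    Sat φ (Sum.elim a Subtype.val) → Sat φ (Sum.elim b Subtype.val)

/-- A sequence of `α`-tuples, indexed by a linear order, is `A`-indiscernible. -/
def Indisc (L : FirstOrder.Language.{0, 0}) {M : Type} [L.Structure M] (A : Set M) {ι : Type} [LinearOrder ι] {α : Type}
    (c : ι → α → M) : Prop :=
  ∀ (n : ℕ) (i j : Fin n → ι), StrictMono i → StrictMono j →
    EqTp L A (fun p : Fin n × α => c (i p.1) p.2) (fun p : Fin n × α => c (j p.1) p.2)

/-- Two tuples lie on a common infinite `A`-indiscernible sequence
(i.e. they are at Lascar distance at most one over `A`). -/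
def OnIndisc (L : FirstOrder.Language.{0, 0}) {M : Type} [L.Structure M] (A : Set M) {α : Type} (a b : α → M) : Prop :=
  ∃ c : ℕ → α → M, Indisc L A c ∧ ((c 0 = a ∧ c 1 = b) ∨ (c 0 = b ∧ c 1 = a))

/-- Lascar strong type equivalence over `A`: a finite chain in which
consecutive tuples lie on a common `A`-indiscernible sequence; `a ≡^Ls_A b`. -/
def LsEq (L : FirstOrder.Language.{0, 0}) {M : Type} [L.Structure M] (A : Set M) {α : Type} (a b : α → M) : Prop :=
  Relation.ReflTransGen (OnIndisc L A) a b

/-- `M` is a monster model (universal domain) of `T` for the smallness bound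
`κ`: an existentially closed model which is very homogeneous and very
saturated with respect to sets of size `< κ`. -/
structure IsMonster {L : FirstOrder.Language.{0, 0}} (T : Set (HSentence L)) (κ : Cardinal) (M : Type) [L.Structure M] :
    Prop where
  aleph0_lt : ℵ₀ < κ
  ec : IsECModelOf T M
  homogeneous : ∀ (α : Type) (a b : α → M), #α < κ → EqTp L (∅ : Set M) a b →
    ∃ f : M ≃ M, IsAuto L f ∧ ∀ x, f (a x) = b x
  saturated : ∀ (α β : Type) (v : β → M) (p : Set (PEFormula L (α ⊕ β) 0)),
    #α < κ → #β < κ → #(↥p) < κ →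
    (∀ s : Finset (PEFormula L (α ⊕ β) 0), ↑s ⊆ p →
      ∃ a : α → M, ∀ φ ∈ s, Sat φ (Sum.elim a v)) →
    ∃ a : α → M, ∀ φ ∈ p, Sat φ (Sum.elim a v)

/-- Thickness: being an (∅-)indiscernible sequence is type-definable. -/
def IsThick (L : FirstOrder.Language.{0, 0}) (κ : Cardinal) (M : Type) [L.Structure M] : Prop :=
  ∀ α : Type, #α < κ → ∃ Θ : Set (PEFormula L (ℕ × α) 0),
    ∀ c : ℕ → α → M,
      (Indisc L (∅ : Set M) c ↔ ∀ φ ∈ Θ, Sat φ fun p : ℕ × α => c p.1 p.2)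

/-- The theory `T` (with monster model `M`) has SOP₁: there is a formula
`φ(x,y)`, an inconsistency witness `ψ(y₁,y₂)` and a binary tree of parameters
such that paths are consistent while `ψ` witnesses inconsistency of
`φ(x, a_{η⌢1})` with `φ(x, a_ν)` whenever `η⌢0 ⊴ ν`. -/
def HasSOP1 {L : FirstOrder.Language.{0, 0}} (T : Set (HSentence L)) (M : Type) [L.Structure M] : Prop :=
  ∃ (k m : ℕ) (φ : PEFormula L (Fin k ⊕ Fin m) 0) (ψ : PEFormula L (Fin m ⊕ Fin m) 0)
    (t : List Bool → Fin m → M),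
    (∀ σ : ℕ → Bool, ∀ s : Finset ℕ, ∃ x : Fin k → M, ∀ n ∈ s,
      Sat φ (Sum.elim x (t (List.ofFn fun i : Fin n => σ i)))) ∧
    (∀ N : PreModel L, N.IsModelOf T → ∀ y₁ y₂ : Fin m → N.carrier,
      Sat ψ (Sum.elim y₁ y₂) →
        ¬∃ x : Fin k → N.carrier, Sat φ (Sum.elim x y₁) ∧ Sat φ (Sum.elim x y₂)) ∧
    (∀ η ν : List Bool, (η ++ [false]) <+: ν →
      Sat ψ (Sum.elim (t (η ++ [true])) (t ν)))

/-- `T` is NSOP₁ (relative to its monster model `M`). -/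
def NSOP1 {L : FirstOrder.Language.{0, 0}} (T : Set (HSentence L)) (M : Type) [L.Structure M] : Prop :=
  ¬HasSOP1 T M

/-- A subset of the monster model which is (the underlying set of) an
existentially closed submodel of `T`. -/
def IsECSubmodel {L : FirstOrder.Language.{0, 0}} (T : Set (HSentence L)) {M : Type} [L.Structure M] (A : Set M) : Prop :=
  ∃ S : L.Substructure M, (S : Set M) = A ∧ IsECModelOf T S

/-- Finite satisfiability (= consistency) of the union `⋃ i, Sg(x, vs i)` of
instances of a partial type: every finite part is realized in `M`. -/
def FinSatUnion {L : FirstOrder.Language.{0, 0}} {M : Type} [L.Structure M] {ξ ζ : Type}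
    (Sg : Set (PEFormula L (ξ ⊕ ζ) 0)) {ι : Type} (vs : ι → ζ → M) : Prop :=
  ∀ (s : Finset (PEFormula L (ξ ⊕ ζ) 0)) (t : Finset ι), ↑s ⊆ Sg →
    ∃ a : ξ → M, ∀ φ ∈ s, ∀ i ∈ t, Sat φ (Sum.elim a (vs i))

/-- The partial type `Sg(x, b)` divides over `C`: there is a `C`-indiscernible
sequence starting (up to type over `C`) at `b` along which the union is
inconsistent. -/
def Divides {L : FirstOrder.Language.{0, 0}} {M : Type} [L.Structure M] (C : Set M) {ξ γ : Type}
    (Sg : Set (PEFormula L (ξ ⊕ γ) 0)) (b : γ → M) : Prop :=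
  ∃ bs : ℕ → γ → M, Indisc L C bs ∧ EqTp L C (bs 0) b ∧ ¬FinSatUnion Sg bs

/-- The partial type `Sg(x, b)` forks over `C`: it implies a (possibly
infinite) disjunction of formulas, each of which divides over `C`.
Implication is tested in all continuations of the monster `M` that model `T`. -/
def Forks {L : FirstOrder.Language.{0, 0}} (T : Set (HSentence L)) {M : Type} [L.Structure M] (C : Set M) {ξ γ : Type}
    (Sg : Set (PEFormula L (ξ ⊕ γ) 0)) (b : γ → M) : Prop :=
  ∃ (I : Type) (ρ : I → Type) (ψ : ∀ i, PEFormula L (ξ ⊕ ρ i) 0) (e : ∀ i, ρ i → M),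
    (∀ i, Divides C {ψ i} (e i)) ∧
    ∀ (N : PreModel L) (h : M → N.carrier), N.IsModelOf T → IsHomMap L h →
      ∀ x : ξ → N.carrier,
        (∀ φ ∈ Sg, Sat φ (Sum.elim x fun y => h (b y))) →
        ∃ i, Sat (ψ i) (Sum.elim x fun y => h (e i y))

/-- The (complete) type of `a` over `C ∪ b`, presented with the tuple `b`
split off from the parameter set `C`. -/
def tpOverWith (L : FirstOrder.Language.{0, 0}) {M : Type} [L.Structure M] (C : Set M) {ξ γ : Type} (a : ξ → M)
    (b : γ → M) : Set (PEFormula L (ξ ⊕ (γ ⊕ ↥C)) 0) :=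
  {φ | Sat φ (Sum.elim a (Sum.elim b Subtype.val))}

/-- Coheir independence: `a ⫫^u_C b`, i.e. `tp(a/Cb)` is finitely
satisfiable in `C`. -/
def UIndep (L : FirstOrder.Language.{0, 0}) {M : Type} [L.Structure M] (C : Set M) {ξ γ : Type} (a : ξ → M)
    (b : γ → M) : Prop :=
  ∀ φ : PEFormula L (ξ ⊕ (γ ⊕ ↥C)) 0,
    Sat φ (Sum.elim a (Sum.elim b Subtype.val)) →
    ∃ a' : ξ → M, (∀ x, a' x ∈ C) ∧ Sat φ (Sum.elim a' (Sum.elim b Subtype.val))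

section TwoMonsters

/-! Global types are presented through their realisations in a fixed bigger
monster model `BigMon ⊇ Mon` (tuples `β : γ → BigMon` stand for the global
type `tp(β/Mon)`). -/

variable (L : FirstOrder.Language.{0, 0}) {Mon BigMon : Type}
variable [L.Structure Mon] [L.Structure BigMon]

/-- The global type (of `β` over `Mon`) extends the type of the tuple `b`
over the parameter set `B ⊆ Mon`. -/
def SameTpOver (emb : Mon → BigMon) (B : Set Mon) {γ : Type} (b : γ → Mon)
    (β : γ → BigMon) : Prop :=
  EqTp L (emb '' B) (fun x => emb (b x)) β

/-- The global type of `β` over the monster is `A`-Lascar-invariant: for any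
small tuples `b ≡^Ls_A b'` in the monster we have `β b ≡^Ls_A β b'`
(computed in the bigger monster). -/
def LsInvariantOver (κ : Cardinal) (emb : Mon → BigMon) (A : Set Mon) {γ : Type}
    (β : γ → BigMon) : Prop :=
  ∀ (δ : Type) (b b' : δ → Mon), #δ < κ → LsEq L A b b' →
    LsEq L (emb '' A) (Sum.elim β fun x => emb (b x)) (Sum.elim β fun x => emb (b' x))

/-- `α` realizes the `n`-fold tensor power `q^{⊗n}` of the global
`A`-Ls-invariant type `q = tp(β/Mon)`, characterised by the universal
property of the tensor product of Lascar-invariant types: for every small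
`B ⊇ A` and every tuple `(b_j)_{j<n}` in the monster,
`(b_j)_j ≡^Ls_B (α_j)_j` iff `b_j ≡^Ls_{B b_{<j}} β` for every `j < n`. -/
def RealizesTensorPow (κ : Cardinal) (emb : Mon → BigMon) (A : Set Mon) {γ : Type}
    (β : γ → BigMon) (n : ℕ) (α : Fin n → γ → BigMon) : Prop :=
  ∀ B : Set Mon, A ⊆ B → #(↥B) < κ → ∀ b : Fin n → γ → Mon,
    (LsEq L (emb '' B) (fun p : Fin n × γ => emb (b p.1 p.2))
        (fun p : Fin n × γ => α p.1 p.2) ↔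
      ∀ j : Fin n,
        LsEq L ((emb '' B) ∪ ⋃ (k : Fin n) (_ : k < j), Set.range fun x => emb (b k x))
          (fun x => emb (b j x)) β)

/-- `(a_i)_{i ∈ ι}` is a Morley sequence in the global `A`-Ls-invariant type
`q = tp(β/Mon)` over `A`: it has the same Lascar strong type over `A` as some
realisation of the iterated tensor power `q^{⊗ι}`. -/
def IsMorleyIn (κ : Cardinal) (emb : Mon → BigMon) (A : Set Mon) {γ : Type}
    (β : γ → BigMon) {ι : Type} [LinearOrder ι] (a : ι → γ → Mon) : Prop :=
  ∃ α : ι → γ → BigMon,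
    LsEq L (emb '' A) (fun p : ι × γ => emb (a p.1 p.2)) (fun p : ι × γ => α p.1 p.2) ∧
    ∀ (n : ℕ) (g : Fin n → ι), StrictMono g →
      RealizesTensorPow L κ emb A β n fun j => α (g j)

/-- The partial type `Sg(x, b)` (over `M ∪ b`) `q`-divides over `M`, where
`q = tp(β/Mon)` is a global `M`-Ls-invariant type: along any Morley sequence
in `q` over `M` the union of the corresponding instances is inconsistent. -/
def QDivides (κ : Cardinal) (emb : Mon → BigMon) (M : Set Mon) {ξ γ : Type}
    (β : γ → BigMon) (Sg : Set (PEFormula L (ξ ⊕ (γ ⊕ ↥M)) 0)) : Prop :=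
  ∀ bs : ℕ → γ → Mon, IsMorleyIn L κ emb M β bs →
    ¬FinSatUnion Sg fun i => Sum.elim (bs i) (Subtype.val : ↥M → Mon)

/-- Kim-independence `a ⫫^K_M b`: the type `tp(a/Mb)` does not Kim-divide
over `M`, i.e. it does not `q`-divide for any global `M`-Lascar-invariant
extension `q` of `tp(b/M)`. -/
def KimIndep (κ : Cardinal) (emb : Mon → BigMon) (M : Set Mon) {ξ γ : Type}
    (a : ξ → Mon) (b : γ → Mon) : Prop :=
  ∀ β : γ → BigMon, SameTpOver L emb M b β → LsInvariantOver L κ emb M β →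
    ¬QDivides L κ emb M β (tpOverWith L M a b)

/-- `a ⫫^{iLs}_C b` : `tp(a/Cb)` extends to a global `C`-Lascar-invariant
type. -/
def ILsIndep (κ : Cardinal) (emb : Mon → BigMon) (C : Set Mon) {ξ γ : Type}
    (a : ξ → Mon) (b : γ → Mon) : Prop :=
  ∃ α : ξ → BigMon, SameTpOver L emb (C ∪ Set.range b) a α ∧ LsInvariantOver L κ emb C α

end TwoMonsters

end PosLog

namespace PosLog

open FirstOrder Cardinal

variable {L : FirstOrder.Language.{0, 0}}

/-! ### Syntactic operations on positive existential formulas -/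

/-- Renaming of the free variables along `f`. -/
def PEFormula.relabel {α β : Type} (f : α → β) : ∀ {n : ℕ}, PEFormula L α n → PEFormula L β n
  | _, .top => .top
  | _, .bot => .bot
  | _, .equal t₁ t₂ => .equal (t₁.relabel (Sum.map f id)) (t₂.relabel (Sum.map f id))
  | _, .rel R ts => .rel R fun i => (ts i).relabel (Sum.map f id)
  | _, .and φ ψ => .and (φ.relabel f) (ψ.relabel f)
  | _, .or φ ψ => .or (φ.relabel f) (ψ.relabel f)
  | _, .ex φ => .ex (φ.relabel f)

lemma realize_relabel {M : Type} [L.Structure M] {α β : Type} (f : α → β) {n : ℕ}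
    (φ : PEFormula L α n) (v : β → M) (xs : Fin n → M) :
    (φ.relabel f).Realize v xs ↔ φ.Realize (v ∘ f) xs := by
  have key : ∀ {n : ℕ} (xs : Fin n → M),
      Sum.elim v xs ∘ Sum.map f id = Sum.elim (v ∘ f) xs := by
    intro n xs; ext x; cases x <;> rfl
  induction φ with
  | top => rfl
  | bot => rfl
  | equal t₁ t₂ =>
    simp only [PEFormula.relabel, PEFormula.Realize, Language.Term.realize_relabel, key]
  | rel R ts =>
    simp only [PEFormula.relabel, PEFormula.Realize, Language.Term.realize_relabel, key]
  | and φ ψ h₁ h₂ => simp only [PEFormula.relabel, PEFormula.Realize, h₁, h₂]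
  | or φ ψ h₁ h₂ => simp only [PEFormula.relabel, PEFormula.Realize, h₁, h₂]
  | ex φ h => simp only [PEFormula.relabel, PEFormula.Realize, h]

lemma sat_relabel {M : Type} [L.Structure M] {α β : Type} (f : α → β)
    (φ : PEFormula L α 0) (v : β → M) : Sat (φ.relabel f) v ↔ Sat φ (v ∘ f) :=
  realize_relabel f φ v _

/-- The renaming of variables that turns the distinguished free variable `inl ()` into the first
quantifiable variable. -/
def bindVar {α : Type} {n : ℕ} : (Unit ⊕ α) ⊕ Fin n → α ⊕ Fin (n + 1)
  | .inl (.inl _) => .inr 0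
  | .inl (.inr x) => .inl x
  | .inr j => .inr j.succ

/-- Turn the distinguished free variable `inl ()` into a quantifiable variable, to be bound by a
subsequent `PEFormula.ex`. -/
def PEFormula.bind {α : Type} : ∀ {n : ℕ}, PEFormula L (Unit ⊕ α) n → PEFormula L α (n + 1)
  | _, .top => .top
  | _, .bot => .bot
  | _, .equal t₁ t₂ => .equal (t₁.relabel bindVar) (t₂.relabel bindVar)
  | _, .rel R ts => .rel R fun i => (ts i).relabel bindVar
  | _, .and φ ψ => .and φ.bind ψ.bind
  | _, .or φ ψ => .or φ.bind ψ.bind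
  | _, .ex φ => .ex φ.bind

lemma realize_bind {M : Type} [L.Structure M] {α : Type} {n : ℕ}
    (φ : PEFormula L (Unit ⊕ α) n) (v : α → M) (xs : Fin (n + 1) → M) :
    φ.bind.Realize v xs ↔ φ.Realize (Sum.elim (fun _ => xs 0) v) (fun j => xs j.succ) := by
  have key : ∀ {n : ℕ} (xs : Fin (n + 1) → M), Sum.elim v xs ∘ bindVar =
      Sum.elim (Sum.elim (fun _ => xs 0) v) (fun j => xs j.succ) := by
    intro n xs; ext x; rcases x with (x | x) | x <;> rfl
  induction φ with
  | top => rfl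
  | bot => rfl
  | equal t₁ t₂ =>
    simp only [PEFormula.bind, PEFormula.Realize, Language.Term.realize_relabel, key]
  | rel R ts =>
    simp only [PEFormula.bind, PEFormula.Realize, Language.Term.realize_relabel, key]
  | and φ ψ h₁ h₂ => simp only [PEFormula.bind, PEFormula.Realize, h₁, h₂]
  | or φ ψ h₁ h₂ => simp only [PEFormula.bind, PEFormula.Realize, h₁, h₂]
  | @ex n φ h =>
    simp only [PEFormula.bind, PEFormula.Realize, h]
    refine exists_congr fun m => ?_
    have e0 : (Fin.snoc xs m : Fin (n + 1 + 1) → M) 0 = xs 0 :=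
      Fin.snoc_castSucc (α := fun _ => M) m xs 0
    have e1 : (fun j : Fin (n + 1) => (Fin.snoc xs m : Fin (n + 1 + 1) → M) j.succ) =
        Fin.snoc (fun j => xs j.succ) m := by
      ext j
      refine Fin.lastCases ?_ (fun j => ?_) j
      · rw [Fin.succ_last, Fin.snoc_last, Fin.snoc_last]
      · rw [Fin.succ_castSucc, Fin.snoc_castSucc, Fin.snoc_castSucc]
    rw [e0, e1]

lemma sat_ex_bind {M : Type} [L.Structure M] {α : Type} (φ : PEFormula L (Unit ⊕ α) 0)
    (v : α → M) : Sat (PEFormula.ex φ.bind) v ↔ ∃ m, Sat φ (Sum.elim (fun _ => m) v) := by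
  simp only [Sat, PEFormula.Realize, realize_bind]
  refine exists_congr fun m => ?_
  have e1 : (fun j : Fin 0 => (Fin.snoc (fun i : Fin 0 => i.elim0) m : Fin 1 → M) j.succ) =
      fun i => i.elim0 := by ext j; exact j.elim0
  rw [e1]
  rfl

lemma exists_conj {α : Type} (s : Finset (PEFormula L α 0)) :
    ∃ ψ : PEFormula L α 0, ∀ (M : Type) [L.Structure M] (v : α → M),
      Sat ψ v ↔ ∀ φ ∈ s, Sat φ v := by
  classical
  induction s using Finset.induction_on with
  | empty => exact ⟨.top, fun M _ v => by simp [Sat, PEFormula.Realize]⟩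
  | insert φ s _ ih =>
    obtain ⟨ψ, hψ⟩ := ih
    refine ⟨.and φ ψ, fun M _ v => ?_⟩
    rw [Finset.forall_mem_insert, ← hψ]
    rfl

lemma term_support {α : Type} (t : L.Term α) : ∃ S : Set α, S.Finite ∧
    ∀ (M : Type) [L.Structure M] (v w : α → M), Set.EqOn v w S → t.realize v = t.realize w := by
  induction t with
  | var x => exact ⟨{x}, Set.finite_singleton x, fun M _ v w h => h rfl⟩
  | func f ts ih =>
    choose S hS h using ih
    refine ⟨⋃ i, S i, Set.finite_iUnion hS, fun M _ v w hvw => ?_⟩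
    simp only [Language.Term.realize]
    congr 1
    ext i
    exact h i M v w (hvw.mono (Set.subset_iUnion S i))

lemma sum_elim_eqOn {M α β : Type} {v w : α → M} {S : Set (α ⊕ β)} (xs : β → M)
    (h : Set.EqOn v w (Sum.inl ⁻¹' S)) : Set.EqOn (Sum.elim v xs) (Sum.elim w xs) S := by
  rintro (x | x) hx
  · exact h hx
  · rfl

/-- The truth of a formula depends on finitely many of its free variables. -/
lemma formula_support {α : Type} {n : ℕ} (φ : PEFormula L α n) : ∃ S : Set α, S.Finite ∧
    ∀ (M : Type) [L.Structure M] (v w : α → M) (xs : Fin n → M), Set.EqOn v w S →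
      (φ.Realize v xs ↔ φ.Realize w xs) := by
  induction φ with
  | top => exact ⟨∅, Set.finite_empty, fun M _ v w xs _ => Iff.rfl⟩
  | bot => exact ⟨∅, Set.finite_empty, fun M _ v w xs _ => Iff.rfl⟩
  | equal t₁ t₂ =>
    obtain ⟨S₁, hS₁, h₁⟩ := term_support t₁
    obtain ⟨S₂, hS₂, h₂⟩ := term_support t₂
    refine ⟨Sum.inl ⁻¹' (S₁ ∪ S₂), (hS₁.union hS₂).preimage Sum.inl_injective.injOn,
      fun M _ v w xs h => ?_⟩
    have h' := sum_elim_eqOn xs h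
    simp only [PEFormula.Realize]
    rw [h₁ M _ _ (h'.mono Set.subset_union_left), h₂ M _ _ (h'.mono Set.subset_union_right)]
  | rel R ts =>
    choose S hS hh using fun i => term_support (ts i)
    refine ⟨Sum.inl ⁻¹' (⋃ i, S i), (Set.finite_iUnion hS).preimage Sum.inl_injective.injOn,
      fun M _ v w xs h => ?_⟩
    have h' := sum_elim_eqOn xs h
    simp only [PEFormula.Realize]
    have : (fun i => (ts i).realize (Sum.elim v xs)) = fun i => (ts i).realize (Sum.elim w xs) := by
      ext i
      exact hh i M _ _ (h'.mono (Set.subset_iUnion S i))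
    rw [this]
  | and φ ψ h₁ h₂ =>
    obtain ⟨S₁, hS₁, h₁⟩ := h₁
    obtain ⟨S₂, hS₂, h₂⟩ := h₂
    refine ⟨S₁ ∪ S₂, hS₁.union hS₂, fun M _ v w xs h => ?_⟩
    exact and_congr (h₁ M v w xs (h.mono Set.subset_union_left))
      (h₂ M v w xs (h.mono Set.subset_union_right))
  | or φ ψ h₁ h₂ =>
    obtain ⟨S₁, hS₁, h₁⟩ := h₁
    obtain ⟨S₂, hS₂, h₂⟩ := h₂
    refine ⟨S₁ ∪ S₂, hS₁.union hS₂, fun M _ v w xs h => ?_⟩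
    exact or_congr (h₁ M v w xs (h.mono Set.subset_union_left))
      (h₂ M v w xs (h.mono Set.subset_union_right))
  | ex φ ih =>
    obtain ⟨S, hS, ih⟩ := ih
    exact ⟨S, hS, fun M _ v w xs h => exists_congr fun m => ih M v w _ h⟩

/-- A formula is equivalent to one obtained by renaming from a formula in finitely many of its
variables. -/
lemma exists_finite_formula {α : Type} (φ : PEFormula L α 0) :
    ∃ (S : Finset α) (ψ : PEFormula L S 0), ∀ (M : Type) [L.Structure M] (v : α → M),
      Sat φ v ↔ Sat ψ (fun x : S => v x) := by
  classical
  obtain ⟨S, hS, h⟩ := formula_support φ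
  by_cases hα : Nonempty α
  · obtain ⟨x₀⟩ := hα
    let S' : Finset α := insert x₀ hS.toFinset
    let f : α → S' := fun x => if hx : x ∈ S' then ⟨x, hx⟩ else ⟨x₀, Finset.mem_insert_self _ _⟩
    refine ⟨S', φ.relabel f, fun M _ v => ?_⟩
    rw [sat_relabel]
    refine h M _ _ _ fun x hx => ?_
    have hx' : x ∈ S' := Finset.mem_insert_of_mem (hS.mem_toFinset.2 hx)
    simp [f, hx']
  · have : IsEmpty α := not_nonempty_iff.1 hα
    refine ⟨∅, φ.relabel fun x => isEmptyElim x, fun M _ v => ?_⟩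
    rw [sat_relabel]
    have : v = (fun x : (∅ : Finset α) => v x) ∘ fun x => isEmptyElim x := by
      ext x; exact isEmptyElim x
    rw [← this]

end PosLog

namespace PosLog

open FirstOrder Cardinal

variable {L : FirstOrder.Language.{0, 0}} {M : Type} [L.Structure M]

/-! ### Calculus of types and Lascar strong types -/

/-- The tuple listing all coordinates of all members of the sequence `s`. -/
abbrev flat {X γ N : Type} (s : X → γ → N) : X × γ → N := fun p => s p.1 p.2

lemma EqTp.refl (A : Set M) {X : Type} (u : X → M) : EqTp L A u u := fun _ => Iff.rfl

lemma EqTp.symm {A : Set M} {X : Type} {u v : X → M} (h : EqTp L A u v) : EqTp L A v u :=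
  fun φ => (h φ).symm

lemma EqTp.trans {A : Set M} {X : Type} {u v w : X → M} (h : EqTp L A u v) (hvw : EqTp L A v w) :
    EqTp L A u w := fun φ => (h φ).trans (hvw φ)

/-- The general reindexing principle for equality of types. A pair of tuples all of whose
coordinates occur at the same place in `(u, v)`, or are a common element of `A`, inherits equality
of types, and the parameters may be enlarged by common coordinates of `u` and `v`. -/
lemma EqTp.of_pointwise {A A' : Set M} {X Y : Type} {u v : X → M} {s t : Y → M}
    (h : EqTp L A u v)
    (hst : ∀ y, (∃ x, s y = u x ∧ t y = v x) ∨ (s y = t y ∧ s y ∈ A))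
    (hA : ∀ z ∈ A', z ∈ A ∨ ∃ x, u x = z ∧ v x = z) : EqTp L A' s t := by
  have key : ∀ w : Y ⊕ ↥A', ∃ r : X ⊕ ↥A,
      Sum.elim s Subtype.val w = Sum.elim u Subtype.val r ∧
      Sum.elim t Subtype.val w = Sum.elim v Subtype.val r := by
    rintro (y | ⟨z, hz⟩)
    · rcases hst y with ⟨x, hx⟩ | ⟨h₁, h₂⟩
      · exact ⟨.inl x, hx⟩
      · exact ⟨.inr ⟨s y, h₂⟩, rfl, h₁.symm⟩
    · rcases hA z hz with hz | ⟨x, hx₁, hx₂⟩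
      · exact ⟨.inr ⟨z, hz⟩, rfl, rfl⟩
      · exact ⟨.inl x, hx₁.symm, hx₂.symm⟩
  choose r hr using key
  intro φ
  have e₁ : Sum.elim s Subtype.val = Sum.elim u Subtype.val ∘ r := funext fun w => (hr w).1
  have e₂ : Sum.elim t Subtype.val = Sum.elim v Subtype.val ∘ r := funext fun w => (hr w).2
  rw [e₁, e₂, ← sat_relabel, ← sat_relabel]
  exact h _

lemma EqTp.mono {A A' : Set M} (hA : A' ⊆ A) {X : Type} {u v : X → M} (h : EqTp L A u v) :
    EqTp L A' u v :=
  h.of_pointwise (fun y => .inl ⟨y, rfl, rfl⟩) fun _ hz => .inl (hA hz)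

lemma EqTp.comp {A : Set M} {X Y : Type} {u v : X → M} (h : EqTp L A u v) (r : Y → X) :
    EqTp L A (u ∘ r) (v ∘ r) :=
  h.of_pointwise (fun y => .inl ⟨r y, rfl, rfl⟩) fun _ hz => .inl hz

/-- Equality of types is of finite character in the tuples. -/
lemma eqTp_of_finite {A : Set M} {X : Type} {u v : X → M}
    (h : ∀ S : Finset X, EqTp L A (fun x : S => u x) (fun x : S => v x)) : EqTp L A u v := by
  classical
  intro φ
  obtain ⟨F, ψ, hψ⟩ := exists_finite_formula φ
  let r : F → F.toLeft ⊕ ↥A := fun x => match x with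
    | ⟨.inl y, hy⟩ => .inl ⟨y, Finset.mem_toLeft.2 hy⟩
    | ⟨.inr z, _⟩ => .inr z
  have e : ∀ w : X → M, (fun x : F => Sum.elim w (Subtype.val : ↥A → M) x) =
      Sum.elim (fun x : F.toLeft => w x) Subtype.val ∘ r := by
    intro w
    ext ⟨y | z, hy⟩ <;> rfl
  rw [hψ M, hψ M, e u, e v, ← sat_relabel, ← sat_relabel]
  exact h _ _

lemma eqTp_flat_on {A : Set M} {O γ : Type} [LinearOrder O] {s t : O → γ → M} {U : Set O}
    (h : ∀ (n : ℕ) (g : Fin n → O), StrictMono g → (∀ k, g k ∈ U) →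
      EqTp L A (flat fun k => s (g k)) (flat fun k => t (g k))) :
    EqTp L A (flat fun x : U => s x) (flat fun x : U => t x) := by
  classical
  refine eqTp_of_finite fun S => ?_
  let F : Finset O := S.image fun p => (p.1 : O)
  have hF : ∀ y ∈ F, y ∈ U := by
    intro y hy
    obtain ⟨p, _, rfl⟩ := Finset.mem_image.1 hy
    exact p.1.2
  refine (h F.card (F.orderEmbOfFin rfl) (F.orderEmbOfFin rfl).strictMono
    fun k => hF _ (F.orderEmbOfFin_mem rfl k)).of_pointwise (fun y => .inl ?_) fun _ hz => .inl hz
  have hy : (y.1.1 : O) ∈ F := Finset.mem_image.2 ⟨y.1, y.2, rfl⟩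
  have : (y.1.1 : O) ∈ Set.range (F.orderEmbOfFin rfl) := by
    rw [Finset.range_orderEmbOfFin]; exact hy
  obtain ⟨k, hk⟩ := this
  exact ⟨(k, y.1.2), by simp [flat, hk], by simp [flat, hk]⟩

lemma eqTp_of_auto {A : Set M} {f : M ≃ M} (hf : IsAuto L f) (hA : ∀ z ∈ A, f z = z) {X : Type}
    (u : X → M) : EqTp L A u (fun x => f (u x)) := by
  intro φ
  have e : Sum.elim (fun x => f (u x)) (Subtype.val : ↥A → M) = f ∘ Sum.elim u Subtype.val := by
    ext (x | ⟨z, hz⟩)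
    · rfl
    · exact (hA z hz).symm
  have e' : Sum.elim u (Subtype.val : ↥A → M) = f.symm ∘ (f ∘ Sum.elim u Subtype.val) := by
    ext x; simp
  constructor
  · intro h; rw [e]; exact hf.1 φ _ h
  · intro h; rw [e] at h; rw [e']; exact hf.2 φ _ h

lemma Indisc.mono {A A' : Set M} (hA : A' ⊆ A) {O γ : Type} [LinearOrder O] {c : O → γ → M}
    (h : Indisc L A c) : Indisc L A' c := fun n i j hi hj => (h n i j hi hj).mono hA

lemma Indisc.auto {A : Set M} {f : M ≃ M} (hf : IsAuto L f) (hA : ∀ z ∈ A, f z = z)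
    {O γ : Type} [LinearOrder O] {c : O → γ → M} (h : Indisc L A c) :
    Indisc L A fun k x => f (c k x) := fun n i j hi hj =>
  ((eqTp_of_auto hf hA _).symm.trans (h n i j hi hj)).trans (eqTp_of_auto hf hA _)

lemma OnIndisc.symm {A : Set M} {X : Type} {u v : X → M} (h : OnIndisc L A u v) :
    OnIndisc L A v u := by
  obtain ⟨c, hc, h⟩ := h
  exact ⟨c, hc, h.symm⟩

lemma OnIndisc.mono {A A' : Set M} (hA : A' ⊆ A) {X : Type} {u v : X → M}
    (h : OnIndisc L A u v) : OnIndisc L A' u v := by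
  obtain ⟨c, hc, h⟩ := h
  exact ⟨c, hc.mono hA, h⟩

lemma OnIndisc.comp {A : Set M} {X Y : Type} {u v : X → M} (h : OnIndisc L A u v) (r : Y → X) :
    OnIndisc L A (u ∘ r) (v ∘ r) := by
  obtain ⟨c, hc, h⟩ := h
  refine ⟨fun k => c k ∘ r, fun n i j hi hj => ?_, ?_⟩
  · exact (hc n i j hi hj).comp fun p : Fin n × Y => (p.1, r p.2)
  · rcases h with ⟨rfl, rfl⟩ | ⟨rfl, rfl⟩ <;> simp

lemma OnIndisc.auto {A : Set M} {f : M ≃ M} (hf : IsAuto L f) (hA : ∀ z ∈ A, f z = z)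
    {X : Type} {u v : X → M} (h : OnIndisc L A u v) :
    OnIndisc L A (fun x => f (u x)) (fun x => f (v x)) := by
  obtain ⟨c, hc, h⟩ := h
  refine ⟨_, hc.auto hf hA, ?_⟩
  rcases h with ⟨rfl, rfl⟩ | ⟨rfl, rfl⟩ <;> simp

lemma OnIndisc.eqTp {A : Set M} {X : Type} {u v : X → M} (h : OnIndisc L A u v) :
    EqTp L A u v := by
  obtain ⟨c, hc, h⟩ := h
  have key : EqTp L A (c 0) (c 1) := by
    refine EqTp.of_pointwise (hc 1 (fun _ => 0) (fun _ => 1) ?_ ?_)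
      (fun y => .inl ⟨(0, y), rfl, rfl⟩) fun _ hz => .inl hz
    all_goals exact Subsingleton.strictMono _
  rcases h with ⟨rfl, rfl⟩ | ⟨rfl, rfl⟩
  · exact key
  · exact key.symm

lemma LsEq.symm {A : Set M} {X : Type} {u v : X → M} (h : LsEq L A u v) : LsEq L A v u := by
  induction h with
  | refl => exact .refl
  | tail _ h ih => exact .head h.symm ih

lemma LsEq.trans {A : Set M} {X : Type} {u v w : X → M} (h : LsEq L A u v) (h' : LsEq L A v w) :
    LsEq L A u w := Relation.ReflTransGen.trans h h'

lemma LsEq.mono {A A' : Set M} (hA : A' ⊆ A) {X : Type} {u v : X → M} (h : LsEq L A u v) :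
    LsEq L A' u v := by
  induction h with
  | refl => exact .refl
  | tail _ h ih => exact .tail ih (h.mono hA)

lemma LsEq.comp {A : Set M} {X Y : Type} {u v : X → M} (h : LsEq L A u v) (r : Y → X) :
    LsEq L A (u ∘ r) (v ∘ r) := by
  induction h with
  | refl => exact .refl
  | tail _ h ih => exact .tail ih (h.comp r)

lemma LsEq.auto {A : Set M} {f : M ≃ M} (hf : IsAuto L f) (hA : ∀ z ∈ A, f z = z)
    {X : Type} {u v : X → M} (h : LsEq L A u v) :
    LsEq L A (fun x => f (u x)) (fun x => f (v x)) := by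
  induction h with
  | refl => exact .refl
  | tail _ h ih => exact .tail ih (h.auto hf hA)

lemma LsEq.eqTp {A : Set M} {X : Type} {u v : X → M} (h : LsEq L A u v) : EqTp L A u v := by
  induction h with
  | refl => exact .refl _ _
  | tail _ h ih => exact ih.trans h.eqTp

/-- Immersions preserve and reflect equality of types. -/
lemma eqTp_emb_iff {N : Type} [L.Structure N] {e : M → N} (he : IsImmersionMap L e) {A : Set M}
    {X : Type} {u v : X → M} :
    EqTp L (e '' A) (fun x => e (u x)) (fun x => e (v x)) ↔ EqTp L A u v := by
  have hsat : ∀ {Y : Type} (φ : PEFormula L Y 0) (w : Y → M), Sat φ (e ∘ w) ↔ Sat φ w :=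
    fun φ w => ⟨he.2 φ w, he.1 φ w⟩
  constructor
  · intro h φ
    let r : X ⊕ ↥A → X ⊕ ↥(e '' A) := Sum.map id fun z => ⟨e z, z, z.2, rfl⟩
    have key : ∀ w : X → M, Sat φ (Sum.elim w Subtype.val) ↔
        Sat (φ.relabel r) (Sum.elim (fun x => e (w x)) Subtype.val) := by
      intro w
      rw [sat_relabel, ← hsat]
      have : e ∘ Sum.elim w (Subtype.val : ↥A → M) =
          Sum.elim (fun x => e (w x)) Subtype.val ∘ r := by
        ext (x | x) <;> rfl
      rw [this]
    rw [key, key]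
    exact h _
  · intro h φ
    choose p hp hp' using fun z : ↥(e '' A) => z.2
    let r : X ⊕ ↥(e '' A) → X ⊕ ↥A := Sum.map id fun z => ⟨p z, hp z⟩
    have key : ∀ w : X → M, Sat φ (Sum.elim (fun x => e (w x)) Subtype.val) ↔
        Sat (φ.relabel r) (Sum.elim w Subtype.val) := by
      intro w
      rw [sat_relabel, ← hsat]
      have : Sum.elim (fun x => e (w x)) (Subtype.val : ↥(e '' A) → N) =
          e ∘ Sum.elim w Subtype.val ∘ r := by
        ext (x | z)
        · rfl
        · exact (hp' z).symm
      rw [this]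
    rw [key, key]
    exact h _

end PosLog

namespace PosLog

open FirstOrder Cardinal

variable {L : FirstOrder.Language.{0, 0}} {M : Type} [L.Structure M]

/-! ### Homogeneity over parameters -/

lemma sat_equal {X : Type} (x y : X) (v : X → M) :
    Sat (PEFormula.equal (L := L) (.var (.inl x)) (.var (.inl y))) v ↔ v x = v y := by
  simp [Sat, PEFormula.Realize]

/-- Homogeneity of a monster over a set of parameters. When the whole monster is small, tuples of
arbitrary length are allowed, since they have few distinct coordinates. -/
lemma exists_auto {T : Set (HSentence L)} {κ : Cardinal} (hM : IsMonster T κ M) {A : Set M}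
    {X : Type} {u v : X → M} (h : EqTp L A u v) (hc : (#X < κ ∧ #(↥A) < κ) ∨ #M < κ) :
    ∃ f : M ≃ M, IsAuto L f ∧ (∀ z ∈ A, f z = z) ∧ ∀ x, f (u x) = v x := by
  have h₀ : EqTp L (∅ : Set M) (Sum.elim u (Subtype.val : ↥A → M)) (Sum.elim v Subtype.val) := by
    refine h.of_pointwise ?_ fun z hz => hz.elim
    rintro (x | z)
    · exact .inl ⟨x, rfl, rfl⟩
    · exact .inr ⟨rfl, z.2⟩
  suffices H : ∃ f : M ≃ M, IsAuto L f ∧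
      ∀ w, f (Sum.elim u (Subtype.val : ↥A → M) w) = Sum.elim v Subtype.val w by
    obtain ⟨f, hf, hfw⟩ := H
    exact ⟨f, hf, fun z hz => hfw (.inr ⟨z, hz⟩), fun x => hfw (.inl x)⟩
  generalize Sum.elim u (Subtype.val : ↥A → M) = u' at h₀ ⊢
  generalize Sum.elim v (Subtype.val : ↥A → M) = v' at h₀ ⊢
  rcases hc with ⟨hX, hA⟩ | hc
  · refine hM.homogeneous _ u' v' ?_ h₀
    rw [mk_sum, lift_id, lift_id]
    exact add_lt_of_lt hM.aleph0_lt.le hX hA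
  · obtain ⟨f, hf, hfw⟩ := hM.homogeneous (Set.range u') (fun r => r.1)
      (fun r => v' (Set.rangeSplitting u' r)) ((mk_set_le _).trans_lt hc)
      (h₀.of_pointwise (fun r => .inl ⟨Set.rangeSplitting u' r,
        (Set.apply_rangeSplitting u' r).symm, rfl⟩) fun z hz => .inl hz)
    refine ⟨f, hf, fun w => ?_⟩
    rw [hfw ⟨u' w, w, rfl⟩]
    have := (h₀ _).1 ((sat_equal (Sum.inl _) (Sum.inl w) _).2
      (Set.apply_rangeSplitting u' ⟨u' w, w, rfl⟩))
    rwa [sat_equal] at this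

/-! ### Small monsters are maximal -/

/-- A relation `G` between two structures is good if it preserves positive existential formulas
from left to right, i.e. if it is (the graph of) a partial homomorphism in the sense of positive
existential types. -/
def Good (L : FirstOrder.Language.{0, 0}) {N M : Type} [L.Structure N] [L.Structure M]
    (G : Set (N × M)) : Prop :=
  ∀ φ : PEFormula L G 0, Sat φ (fun p : G => p.1.1) → Sat φ (fun p : G => p.1.2)

variable {N : Type} [L.Structure N]

lemma good_sUnion {c : Set (Set (N × M))} (hc : ∀ G ∈ c, Good L G) (hch : IsChain (· ⊆ ·) c)
    (hne : c.Nonempty) : Good L (⋃₀ c) := by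
  classical
  intro φ hφ
  obtain ⟨F, ψ, hψ⟩ := exists_finite_formula φ
  have key : ∀ F : Finset ↥(⋃₀ c), ∃ G ∈ c, ∀ x ∈ F, x.1 ∈ G := by
    intro F
    induction F using Finset.induction_on with
    | empty => exact ⟨hne.some, hne.some_mem, by simp⟩
    | insert x F _ ih =>
      obtain ⟨G, hG, h⟩ := ih
      obtain ⟨G', hG', hx⟩ := x.2
      rcases hch.total hG hG' with hle | hle
      · refine ⟨G', hG', fun y hy => ?_⟩
        rcases Finset.mem_insert.1 hy with rfl | hy
        · exact hx
        · exact hle (h y hy)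
      · refine ⟨G, hG, fun y hy => ?_⟩
        rcases Finset.mem_insert.1 hy with rfl | hy
        · exact hle hx
        · exact h y hy
  obtain ⟨G, hG, hFG⟩ := key F
  let r : F → G := fun x => ⟨x.1.1, hFG x.1 x.2⟩
  have := hc G hG (ψ.relabel r)
  rw [sat_relabel, sat_relabel] at this
  rw [hψ] at hφ ⊢
  exact this hφ

/-- By saturation of a small monster `M`, a maximal good relation has full domain. -/
lemma exists_mem_of_maximal_good {T : Set (HSentence L)} {κ : Cardinal} (hM : IsMonster T κ M)
    (hc : #M < κ) {G : Set (N × M)} (hG : Good L G) (hmax : ∀ G', Good L G' → G ⊆ G' → G' ⊆ G)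
    (c : N) : ∃ m, (c, m) ∈ G := by
  classical
  by_contra hcon
  push Not at hcon
  have key : ∀ m, ∃ ψ : PEFormula L (Unit ⊕ G) 0,
      Sat ψ (Sum.elim (fun _ => c) fun p : G => p.1.1) ∧
      ¬ Sat ψ (Sum.elim (fun _ => m) fun p : G => p.1.2) := by
    intro m
    by_contra hm
    push Not at hm
    refine hcon m (hmax (insert (c, m) G) (fun φ hφ => ?_) (Set.subset_insert _ _)
      (Set.mem_insert _ _))
    let r : ↥(insert (c, m) G) → Unit ⊕ G := fun p =>
      if h : p.1 ∈ G then .inr ⟨p.1, h⟩ else .inl ()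
    have e₁ : (fun p : ↥(insert (c, m) G) => p.1.1) =
        (Sum.elim (fun _ => c) fun p : G => p.1.1) ∘ r := by
      ext ⟨p, hp⟩
      by_cases h : p ∈ G
      · simp [r, h]
      · rcases hp with rfl | hp
        · simp [r, h]
        · exact (h hp).elim
    have e₂ : (fun p : ↥(insert (c, m) G) => p.1.2) =
        (Sum.elim (fun _ => m) fun p : G => p.1.2) ∘ r := by
      ext ⟨p, hp⟩
      by_cases h : p ∈ G
      · simp [r, h]
      · rcases hp with rfl | hp
        · simp [r, h]
        · exact (h hp).elim
    rw [e₁, ← sat_relabel] at hφ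
    rw [e₂, ← sat_relabel]
    exact hm _ hφ
  choose ψ hψ₁ hψ₂ using key
  let r : Unit ⊕ G → Unit ⊕ M := Sum.map id fun p => p.1.2
  have hr : ∀ w : Unit → M, Sum.elim w id ∘ r = Sum.elim w fun p : G => p.1.2 := by
    intro w; ext (x | x) <;> rfl
  obtain ⟨w, hw⟩ := hM.saturated Unit M id (Set.range fun m => (ψ m).relabel r)
    (by rw [mk_unit]; exact one_lt_aleph0.trans hM.aleph0_lt) hc (mk_range_le.trans_lt hc) (by
      intro s hs
      rw [← Set.image_univ, Finset.subset_set_image_iff] at hs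
      obtain ⟨t, -, rfl⟩ := hs
      obtain ⟨χ, hχ⟩ := exists_conj (t.image ψ)
      have h₁ : Sat (PEFormula.ex χ.bind) (fun p : G => p.1.1) :=
        (sat_ex_bind _ _).2 ⟨c, (hχ _ _).2 fun φ hφ => by
          obtain ⟨m, -, rfl⟩ := Finset.mem_image.1 hφ
          exact hψ₁ m⟩
      obtain ⟨m', hm'⟩ := (sat_ex_bind _ _).1 (hG _ h₁)
      refine ⟨fun _ => m', fun φ hφ => ?_⟩
      obtain ⟨m, hm, rfl⟩ := Finset.mem_image.1 hφ
      rw [sat_relabel, hr]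
      exact (hχ _ _).1 hm' _ (Finset.mem_image_of_mem ψ hm))
  have := hw _ ⟨w (), rfl⟩
  rw [sat_relabel, hr] at this
  exact hψ₂ (w ()) this

/-- A monster which is smaller than its own smallness bound has no proper existentially closed
extension: by saturation the extension retracts to it, and the retraction is injective. -/
lemma surjective_of_small {T : Set (HSentence L)} {κ : Cardinal} (hM : IsMonster T κ M)
    (hN : IsECModelOf T N) {e : M → N} (he : IsImmersionMap L e) (hc : #M < κ) :
    Function.Surjective e := by
  have hG₀ : Good L (Set.range fun m => (e m, m)) := by
    intro φ hφ
    refine he.2 φ _ ?_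
    have : (e ∘ fun p : ↥(Set.range fun m => (e m, m)) => p.1.2) = fun p => p.1.1 := by
      ext ⟨p, m, rfl⟩; rfl
    rwa [this]
  obtain ⟨G, hG₀G, hG⟩ := zorn_subset_nonempty {G : Set (N × M) | Good L G}
    (fun c hc hch hne => ⟨⋃₀ c, good_sUnion hc hch hne, fun s hs => Set.subset_sUnion_of_mem hs⟩)
    _ hG₀
  have hgood : Good L G := hG.prop
  choose ρ hρ using exists_mem_of_maximal_good hM hc hgood fun G' hG' hle => hG.le_of_ge hG' hle
  have hhom : IsHomMap L ρ := by
    intro X φ v hφ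
    have := hgood (φ.relabel fun x => ⟨(v x, ρ (v x)), hρ (v x)⟩)
    rw [sat_relabel, sat_relabel] at this
    exact this hφ
  have himm := hN.2 ⟨M, inferInstance⟩ ρ hM.ec.1 hhom
  have hinj : Function.Injective ρ := by
    intro x y hxy
    have := himm.2 (PEFormula.equal (L := L) (.var (.inl true)) (.var (.inl false)))
      (fun b => if b then x else y)
    rw [sat_equal, sat_equal] at this
    exact this (by simpa using hxy)
  have hret : ∀ m, ρ (e m) = m := by
    intro m
    exact (sat_equal (L := L) _ _ _).1 (hgood _ ((sat_equal (⟨(e m, ρ (e m)), hρ (e m)⟩ : G)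
      (⟨(e m, m), hG₀G ⟨m, rfl⟩⟩ : G) _).2 rfl))
  exact fun n => ⟨ρ n, hinj (hret (ρ n))⟩

end PosLog

namespace PosLog

open FirstOrder Cardinal

variable {L : FirstOrder.Language.{0, 0}} {M : Type} [L.Structure M]

/-! ### Indiscernible sequences over arbitrary orders -/

/-- Subsequences of the same order type of an indiscernible sequence have the same type. -/
lemma Indisc.eqTp_strictMono {A : Set M} {O γ W : Type} [LinearOrder O] [LinearOrder W]
    {c : O → γ → M} (hc : Indisc L A c) {f f' : W → O} (hf : StrictMono f) (hf' : StrictMono f') :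
    EqTp L A (flat fun w => c (f w)) (flat fun w => c (f' w)) := by
  have := eqTp_flat_on (L := L) (A := A) (s := fun w => c (f w)) (t := fun w => c (f' w))
    (U := Set.univ) fun n g hg _ => hc n _ _ (hf.comp hg) (hf'.comp hg)
  exact this.comp fun p : W × γ => (⟨p.1, trivial⟩, p.2)

lemma Indisc.comp_strictMono {A : Set M} {O γ W : Type} [LinearOrder O] [LinearOrder W]
    {c : O → γ → M} (hc : Indisc L A c) {f : W → O} (hf : StrictMono f) :
    Indisc L A fun w => c (f w) :=
  fun n _ _ hi hj => hc n _ _ (hf.comp hi) (hf.comp hj)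

lemma Indisc.dual {A : Set M} {O γ : Type} [LinearOrder O] {c : O → γ → M} (hc : Indisc L A c) :
    Indisc L A fun w : Oᵒᵈ => c (OrderDual.ofDual w) := by
  intro n i j hi hj
  have h := hc n (fun k => OrderDual.ofDual (i k.rev)) (fun k => OrderDual.ofDual (j k.rev))
    (fun k l hkl => hi (Fin.rev_lt_rev.2 hkl)) (fun k l hkl => hj (Fin.rev_lt_rev.2 hkl))
  refine h.of_pointwise (fun y => .inl ⟨(y.1.rev, y.2), ?_, ?_⟩) fun _ hz => .inl hz <;> simp

/-- A block of an indiscernible `ω`-sequence has the same Lascar strong type as a block of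
consecutive members far to the right: both begin an indiscernible sequence of blocks. -/
lemma Indisc.lsEq_far {A : Set M} {γ : Type} {b : ℕ → γ → M} (hb : Indisc L A b) {n : ℕ}
    {s : Fin n → ℕ} (hs : StrictMono s) {N : ℕ} (hN : ∀ j, s j < N) :
    LsEq L A (flat fun j => b (s j)) (flat fun j : Fin n => b (N + j)) := by
  let d : ℕ → Fin n → ℕ := fun k j => if k = 0 then s j else N + n * (k - 1) + j
  have hd : ∀ k l j j', k < l → d k j < d l j' := by
    intro k l j j' hkl
    obtain ⟨l, rfl⟩ : ∃ l', l = l' + 1 := ⟨l - 1, by omega⟩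
    rcases k with _ | k
    · have := hN j
      simp only [d]
      simp
      omega
    · have h₁ : k + 1 ≤ l := by omega
      have h₂ := Nat.mul_le_mul_left n h₁
      have h₃ := j.2
      simp only [d]
      simp
      rw [Nat.mul_succ] at h₂
      omega
  have hd' : ∀ k, StrictMono (d k) := by
    intro k j j' h
    by_cases hk : k = 0
    · simpa [d, hk] using hs h
    · have : (j : ℕ) < j' := h
      simp only [d, hk, if_false]
      omega
  refine Relation.ReflTransGen.single ⟨fun k => flat fun j => b (d k j), ?_, .inl ⟨?_, ?_⟩⟩
  · intro m i i' hi hi'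
    have hlex : ∀ i : Fin m → ℕ, StrictMono i →
        StrictMono fun w : Fin m ×ₗ Fin n => d (i (ofLex w).1) (ofLex w).2 := by
      intro i hi w w' hw
      rcases Prod.Lex.lt_iff.1 hw with h | ⟨h, h'⟩
      · exact hd _ _ _ _ (hi h)
      · simp only [h]
        exact hd' _ h'
    exact (hb.eqTp_strictMono (hlex i hi) (hlex i' hi')).comp
      fun p : Fin m × (Fin n × γ) => (toLex (p.1, p.2.1), p.2.2)
  · ext p; simp [d, flat]
  · ext p; simp [d, flat]

lemma Indisc.lsEq_nat {A : Set M} {γ : Type} {b : ℕ → γ → M} (hb : Indisc L A b) {n : ℕ}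
    {s s' : Fin n → ℕ} (hs : StrictMono s) (hs' : StrictMono s') :
    LsEq L A (flat fun j => b (s j)) (flat fun j => b (s' j)) := by
  have hle : ∀ t : Fin n → ℕ, ∀ j, t j ≤ ∑ j, t j := fun t j =>
    Finset.single_le_sum (f := t) (fun _ _ => Nat.zero_le _) (Finset.mem_univ j)
  refine (hb.lsEq_far hs (N := ∑ j, s j + ∑ j, s' j + 1) fun j => ?_).trans
    (hb.lsEq_far hs' fun j => ?_).symm
  · have := hle s j
    omega
  · have := hle s' j
    omega

lemma mul_fin_lt {κ : Cardinal} (hκ : ℵ₀ < κ) {γ X : Type} [Finite X] (hγ : #γ < κ) :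
    #(X × γ) < κ := by
  rw [mk_prod, lift_id, lift_id]
  exact mul_lt_of_lt hκ.le ((lt_aleph0_of_finite X).trans hκ) hγ

lemma Indisc.lsEq_of_nat {T : Set (HSentence L)} {κ : Cardinal} (hM : IsMonster T κ M)
    {A : Set M} (hA : #(↥A) < κ) {O γ : Type} [LinearOrder O] (hγ : #γ < κ) {c : O → γ → M}
    (hc : Indisc L A c) {h : ℕ → O} (hh : StrictMono h) {n : ℕ} {g g' : Fin n → O}
    (hg : StrictMono g) (hg' : StrictMono g') :
    LsEq L A (flat fun j => c (g j)) (flat fun j => c (g' j)) := by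
  classical
  let K : Finset O := Finset.univ.image g ∪ Finset.univ.image g'
  let k := K.orderEmbOfFin rfl
  obtain ⟨f, hf, hfA, hfk⟩ := exists_auto hM (hc.eqTp_strictMono
    (f := fun j : Fin K.card => h j) (fun _ _ hij => hh hij) k.strictMono)
    (.inl ⟨mul_fin_lt hM.aleph0_lt hγ, hA⟩)
  have hb := (hc.comp_strictMono hh).auto hf hfA
  have hfact : ∀ g : Fin n → O, StrictMono g → (∀ j, g j ∈ K) →
      ∃ s : Fin n → ℕ, StrictMono s ∧ ∀ j x, f (c (h (s j)) x) = c (g j) x := by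
    intro g hg hgK
    have : ∀ j, ∃ i, k i = g j := by
      intro j
      have : g j ∈ Set.range k := by
        rw [Finset.range_orderEmbOfFin]; exact hgK j
      exact this
    choose s hs using this
    refine ⟨fun j => s j, fun i j hij => ?_, fun j x => ?_⟩
    · have : k (s i) < k (s j) := by rw [hs, hs]; exact hg hij
      exact k.lt_iff_lt.1 this
    · rw [hfk (s j, x)]
      exact congrFun (congrArg c (hs j)) x
  obtain ⟨s, hs, hsg⟩ := hfact g hg fun j =>
    Finset.mem_union_left _ (Finset.mem_image_of_mem g (Finset.mem_univ j))
  obtain ⟨s', hs', hsg'⟩ := hfact g' hg' fun j =>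
    Finset.mem_union_right _ (Finset.mem_image_of_mem g' (Finset.mem_univ j))
  have := hb.lsEq_nat hs hs'
  simpa only [flat, hsg, hsg'] using this

/-- In an infinite indiscernible sequence of small tuples, increasing finite subsequences of the
same length have the same Lascar strong type. -/
lemma Indisc.lsEq {T : Set (HSentence L)} {κ : Cardinal} (hM : IsMonster T κ M)
    {A : Set M} (hA : #(↥A) < κ) {O γ : Type} [LinearOrder O] [Infinite O] (hγ : #γ < κ)
    {c : O → γ → M} (hc : Indisc L A c) {n : ℕ} {g g' : Fin n → O}
    (hg : StrictMono g) (hg' : StrictMono g') :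
    LsEq L A (flat fun j => c (g j)) (flat fun j => c (g' j)) := by
  obtain ⟨e, he | he⟩ := exists_increasing_or_nonincreasing_subseq (· < ·) (Infinite.natEmbedding O)
  · exact hc.lsEq_of_nat hM hA hγ (h := fun k => Infinite.natEmbedding O (e k))
      (fun i j hij => he i j hij) hg hg'
  · have h := hc.dual.lsEq_of_nat hM hA hγ
      (h := fun k => OrderDual.toDual (Infinite.natEmbedding O (e k)))
      (fun i j hij => by
        rw [OrderDual.toDual_lt_toDual]
        refine lt_of_le_of_ne (not_lt.1 (he i j hij)) fun heq => ?_
        exact hij.ne' (e.injective ((Infinite.natEmbedding O).injective heq)))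
      (g := fun j => OrderDual.toDual (g j.rev)) (g' := fun j => OrderDual.toDual (g' j.rev))
      (fun i j hij => hg (Fin.rev_lt_rev.2 hij)) (fun i j hij => hg' (Fin.rev_lt_rev.2 hij))
    have h' := h.comp fun p : Fin n × γ => (p.1.rev, p.2)
    simpa [flat, Function.comp_def] using h'

end PosLog

namespace PosLog

open FirstOrder Cardinal

variable {L : FirstOrder.Language.{0, 0}}

/-! ### Finite parts of a Morley sequence -/

/-- The data of a Morley sequence `a` in the global Lascar-invariant type of `q`, together with a
realisation `α` of the iterated tensor power having the same Lascar strong type. -/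
structure MorleyCtx (T : Set (HSentence L)) (κ κ' : Cardinal) {Mon BigMon : Type}
    [L.Structure Mon] [L.Structure BigMon] (emb : Mon → BigMon) (A : Set Mon) {γ : Type}
    (q : γ → BigMon) {ι : Type} [LinearOrder ι] (a : ι → γ → Mon) (α : ι → γ → BigMon) :
    Prop where
  mon : IsMonster T κ Mon
  bigMon : IsMonster T κ' BigMon
  imm : IsImmersionMap L emb
  size : #Mon < κ'
  cardA : #(↥A) < κ
  cardγ : #γ < κ
  inv : LsInvariantOver L κ emb A q
  cardι : #ι < κ
  ls : LsEq L (emb '' A) (flat fun i x => emb (a i x)) (flat α)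
  tensor : ∀ (n : ℕ) (g : Fin n → ι), StrictMono g →
    RealizesTensorPow L κ emb A q n fun j => α (g j)

variable {T : Set (HSentence L)} {κ κ' : Cardinal} {Mon BigMon : Type}
  [L.Structure Mon] [L.Structure BigMon] {emb : Mon → BigMon} {A : Set Mon} {γ : Type}
  {q : γ → BigMon} {ι : Type} [LinearOrder ι] {a : ι → γ → Mon} {α : ι → γ → BigMon}

/-- The first assertion of the theorem over finitely many earlier members of the sequence. -/
lemma MorleyCtx.ls_finite (H : MorleyCtx T κ κ' emb A q a α) (S : Finset ι) (y : ι)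
    (hS : ∀ x ∈ S, x < y) :
    LsEq L (emb '' (A ∪ ⋃ x ∈ S, Set.range (a x))) (fun x => emb (a y x)) q := by
  classical
  let F := insert y S
  let g := F.orderEmbOfFin rfl
  have hg : ∀ x ∈ F, ∃ j, g j = x := by
    intro x hx
    have : x ∈ Set.range g := by rw [Finset.range_orderEmbOfFin]; exact hx
    exact this
  have h := (H.tensor _ g g.strictMono A subset_rfl H.cardA (fun j => a (g j))).1
    (H.ls.comp fun p : Fin F.card × γ => (g p.1, p.2))
  obtain ⟨j, hj⟩ := hg y (Finset.mem_insert_self _ _)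
  have hj' := h j
  rw [hj] at hj'
  refine hj'.mono ?_
  rintro _ ⟨w, hw | hw, rfl⟩
  · exact .inl ⟨w, hw, rfl⟩
  · simp only [Set.mem_iUnion] at hw
    obtain ⟨x, hx, t, rfl⟩ := hw
    obtain ⟨k, rfl⟩ := hg x (Finset.mem_insert_of_mem hx)
    refine .inr ?_
    simp only [Set.mem_iUnion]
    refine ⟨k, ?_, t, rfl⟩
    have := hS _ hx
    rw [← hj] at this
    exact g.lt_iff_lt.1 this

lemma MorleyCtx.card_base (H : MorleyCtx T κ κ' emb A q a α) (S : Finset ι) :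
    #(↥(A ∪ ⋃ x ∈ S, Set.range (a x))) < κ := by
  refine (mk_union_le _ _).trans_lt (add_lt_of_lt H.mon.aleph0_lt.le H.cardA ?_)
  have : (⋃ x ∈ S, Set.range (a x)) = Set.range (flat fun x : S => a x) := by
    ext z
    simp [flat]
  rw [this]
  exact mk_range_le.trans_lt (mul_fin_lt H.mon.aleph0_lt H.cardγ)

/-- A finite part of the sequence has, over finitely many earlier members, the same Lascar strong
type as any finite part of the realisation of the tensor power of the same length. -/
lemma MorleyCtx.ls_tensor (H : MorleyCtx T κ κ' emb A q a α) (S : Finset ι) {n : ℕ}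
    {y g : Fin n → ι} (hy : StrictMono y) (hg : StrictMono g) (hS : ∀ x ∈ S, ∀ j, x < y j) :
    LsEq L (emb '' (A ∪ ⋃ x ∈ S, Set.range (a x))) (flat fun j x => emb (a (y j) x))
      (flat fun j => α (g j)) := by
  classical
  refine (H.tensor n g hg _ Set.subset_union_left (H.card_base S) (fun j => a (y j))).2 fun j => ?_
  refine (H.ls_finite (S ∪ (Finset.univ.filter (· < j)).image y) (y j) ?_).mono ?_
  · intro x hx
    rcases Finset.mem_union.1 hx with hx | hx
    · exact hS x hx j
    · obtain ⟨k, hk, rfl⟩ := Finset.mem_image.1 hx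
      exact hy (Finset.mem_filter.1 hk).2
  · rintro _ (⟨w, hw | hw, rfl⟩ | hz)
    · exact ⟨w, .inl hw, rfl⟩
    · simp only [Set.mem_iUnion] at hw
      obtain ⟨x, hx, hw⟩ := hw
      refine ⟨w, .inr ?_, rfl⟩
      simp only [Set.mem_iUnion]
      exact ⟨x, Finset.mem_union_left _ hx, hw⟩
    · simp only [Set.mem_iUnion] at hz
      obtain ⟨k, hk, t, rfl⟩ := hz
      refine ⟨a (y k) t, .inr ?_, rfl⟩
      simp only [Set.mem_iUnion]
      exact ⟨y k, Finset.mem_union_right _ (Finset.mem_image_of_mem y (by simpa using hk)), t, rfl⟩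

lemma MorleyCtx.eqTp_seq (H : MorleyCtx T κ κ' emb A q a α) {n : ℕ} {g g' : Fin n → ι}
    (hg : StrictMono g) (hg' : StrictMono g') :
    EqTp L (emb '' A) (flat fun j x => emb (a (g j) x)) (flat fun j x => emb (a (g' j) x)) := by
  have hle : emb '' A ⊆ emb '' (A ∪ ⋃ x ∈ (∅ : Finset ι), Set.range (a x)) :=
    Set.image_mono Set.subset_union_left
  exact ((H.ls_tensor ∅ hg hg (by simp)).mono hle).eqTp.trans
    ((H.ls_tensor ∅ hg' hg (by simp)).mono hle).eqTp.symm

/-- The second assertion of the theorem. The condition characterising a tensor power of `q` does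
not refer to the chosen indices, so all increasing finite subsequences have the same type. -/
lemma MorleyCtx.indisc (H : MorleyCtx T κ κ' emb A q a α) : Indisc L A a :=
  fun _ _ _ hi hj => (eqTp_emb_iff H.imm).1 (H.eqTp_seq hi hj)

/-! ### Sequences with the same finite types as the Morley sequence -/

/-- The restriction of `s` to `U` has the same finite types over `B` as the sequence `b`: every
increasing finite subsequence from `U` has the type of all increasing finite subsequences of `b` of
the same length. -/
def PSeqOn (L : FirstOrder.Language.{0, 0}) {M : Type} [L.Structure M] (B : Set M) {γ ι O : Type}
    [LinearOrder ι] [LinearOrder O] (b : ι → γ → M) (s : O → γ → M) (U : Set O) : Prop :=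
  ∀ (n : ℕ) (g : Fin n → O) (g' : Fin n → ι), StrictMono g → (∀ k, g k ∈ U) → StrictMono g' →
    EqTp L B (flat fun k => s (g k)) (flat fun k => b (g' k))

section PSeqOn

variable {M : Type} [L.Structure M] {B : Set M} {O : Type} [LinearOrder O] {b : ι → γ → M}

lemma PSeqOn.mono {s : O → γ → M} {U V : Set O} (h : PSeqOn L B b s U) (hVU : V ⊆ U) :
    PSeqOn L B b s V :=
  fun n g g' hg hgV hg' => h n g g' hg (fun k => hVU (hgV k)) hg'

lemma PSeqOn.congr {s s' : O → γ → M} {U : Set O} (h : PSeqOn L B b s U)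
    (hs : ∀ x ∈ U, s' x = s x) : PSeqOn L B b s' U := by
  intro n g g' hg hgU hg'
  have := h n g g' hg hgU hg'
  refine this.of_pointwise (fun y => .inl ⟨y, ?_, rfl⟩) fun _ hz => .inl hz
  simp [flat, hs _ (hgU y.1)]

lemma PSeqOn.comp {W : Type} [LinearOrder W] {s : O → γ → M} {U : Set O} (h : PSeqOn L B b s U)
    {w : W → O} {V : Set W} (hw : StrictMonoOn w V) (hwU : ∀ x ∈ V, w x ∈ U) :
    PSeqOn L B b (fun x => s (w x)) V :=
  fun n g g' hg hgV hg' => h n (fun k => w (g k)) g' (fun i j hij => hw (hgV i) (hgV j) (hg hij))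
    (fun k => hwU _ (hgV k)) hg'

lemma PSeqOn.auto {s : O → γ → M} {U : Set O} (h : PSeqOn L B b s U) {f : M ≃ M}
    (hf : IsAuto L f) (hB : ∀ z ∈ B, f z = z) : PSeqOn L B b (fun x t => f (s x t)) U :=
  fun n g g' hg hgU hg' => (eqTp_of_auto hf hB _).symm.trans (h n g g' hg hgU hg')

lemma exists_strictMono_fin (ι : Type) [LinearOrder ι] [Infinite ι] (n : ℕ) :
    ∃ g : Fin n → ι, StrictMono g := by
  obtain ⟨F, hF⟩ := Infinite.exists_subset_card_eq ι n
  exact ⟨F.orderEmbOfFin hF, (F.orderEmbOfFin hF).strictMono⟩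

lemma PSeqOn.eqTp [Infinite ι] {s s' : O → γ → M} {U : Set O} (h : PSeqOn L B b s U)
    (h' : PSeqOn L B b s' U) : EqTp L B (flat fun x : U => s x) (flat fun x : U => s' x) := by
  refine eqTp_flat_on fun n g hg hgU => ?_
  obtain ⟨g', hg'⟩ := exists_strictMono_fin ι n
  exact (h n g g' hg hgU hg').trans (h' n g g' hg hgU hg').symm

/-- It suffices to realise every finite part of `s` on `U` inside `b`, up to equality of types. -/
lemma pSeqOn_of_local (hb : PSeqOn L B b b Set.univ) {s : O → γ → M} {U : Set O}
    (h : ∀ S : Finset O, ↑S ⊆ U → ∃ w : O → ι, StrictMonoOn w S ∧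
      EqTp L B (flat fun x : S => s x) (flat fun x : S => b (w x))) : PSeqOn L B b s U := by
  classical
  intro n g g' hg hgU hg'
  obtain ⟨w, hw, hsw⟩ := h (Finset.univ.image g) (by
    intro x hx
    obtain ⟨k, -, rfl⟩ := Finset.mem_image.1 hx
    exact hgU k)
  have hmem : ∀ k, g k ∈ Finset.univ.image g := fun k =>
    Finset.mem_image_of_mem g (Finset.mem_univ k)
  have h₁ : EqTp L B (flat fun k => s (g k)) (flat fun k => b (w (g k))) :=
    hsw.comp fun p : Fin n × γ => (⟨g p.1, hmem p.1⟩, p.2)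
  exact h₁.trans (hb n (fun k => w (g k)) g' (fun i j hij => hw (hmem i) (hmem j) (hg hij))
    (fun _ => trivial) hg')

end PSeqOn

lemma MorleyCtx.pSeqOn_univ (H : MorleyCtx T κ κ' emb A q a α) :
    PSeqOn L (emb '' A) (fun i x => emb (a i x)) (fun i x => emb (a i x)) Set.univ :=
  fun _ _ _ hg _ hgb => H.eqTp_seq hg hgb

/-- The Morley sequence prolonged by the realisation `q` of the global type. -/
def withQ (emb : Mon → BigMon) (a : ι → γ → Mon) (q : γ → BigMon) : WithTop ι → γ → BigMon :=
  fun d x => WithTop.recTopCoe (q x) (fun i => emb (a i x)) d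

/-- A realisation of the global type behaves like a further member of the sequence. This is where
the invariance of the global type is used. -/
lemma MorleyCtx.pSeqOn_withQ [Infinite ι] (H : MorleyCtx T κ κ' emb A q a α) :
    PSeqOn L (emb '' A) (fun i x => emb (a i x)) (withQ emb a q) Set.univ := by
  classical
  intro n g g' hg _ hg'
  rcases n with _ | n
  · exact (EqTp.refl _ (fun x : Fin 0 × γ => x.1.elim0)).of_pointwise
      (fun y => y.1.elim0) fun _ hz => .inl hz
  have hcast : ∀ j : Fin n, g j.castSucc ≠ ⊤ := fun j =>
    ((hg (Fin.castSucc_lt_last j)).trans_le le_top).ne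
  by_cases htop : g (Fin.last n) = ⊤
  · choose g₀ hg₀ using fun j => WithTop.ne_top_iff_exists.1 (hcast j)
    have hg₀m : StrictMono g₀ := by
      intro i j hij
      have : g i.castSucc < g j.castSucc := hg (Fin.castSucc_lt_castSucc_iff.2 hij)
      rw [← hg₀, ← hg₀] at this
      exact WithTop.coe_lt_coe.1 this
    have hg'c : StrictMono fun j : Fin n => g' j.castSucc :=
      fun i j hij => hg' (Fin.castSucc_lt_castSucc_iff.2 hij)
    have h₁ := (H.inv (Fin n × γ) (flat fun j => a (g₀ j)) (flat fun j => a (g' j.castSucc))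
      (mul_fin_lt H.mon.aleph0_lt H.cardγ)
      (H.indisc.lsEq H.mon H.cardA H.cardγ hg₀m hg'c)).eqTp
    have h₂ := (H.ls_finite (Finset.univ.image fun j : Fin n => g' j.castSucc) (g' (Fin.last n)) (by
      intro x hx
      obtain ⟨j, -, rfl⟩ := Finset.mem_image.1 hx
      exact hg' (Fin.castSucc_lt_last j))).eqTp.symm
    have h₃ : EqTp L (emb '' A)
        (Sum.elim q (fun p : Fin n × γ => emb (a (g' p.1.castSucc) p.2)))
        (Sum.elim (fun x => emb (a (g' (Fin.last n)) x))
          (fun p : Fin n × γ => emb (a (g' p.1.castSucc) p.2))) := by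
      refine h₂.of_pointwise ?_ ?_
      · rintro (x | p)
        · exact .inl ⟨x, rfl, rfl⟩
        · refine .inr ⟨rfl, a (g' p.1.castSucc) p.2, .inr ?_, rfl⟩
          simp only [Set.mem_iUnion]
          exact ⟨_, Finset.mem_image_of_mem _ (Finset.mem_univ p.1), p.2, rfl⟩
      · rintro _ ⟨z, hz, rfl⟩
        exact .inl ⟨z, .inl hz, rfl⟩
    refine (h₁.trans h₃).of_pointwise ?_ fun _ hz => .inl hz
    rintro ⟨j, x⟩
    left
    refine Fin.lastCases ?_ (fun j => ?_) j
    · exact ⟨.inl x, by simp [flat, withQ, htop], rfl⟩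
    · exact ⟨.inr (j, x), by simp [flat, withQ, ← hg₀], rfl⟩
  · have hne : ∀ j, g j ≠ ⊤ := by
      intro j
      refine Fin.lastCases htop hcast j
    choose g₀ hg₀ using fun j => WithTop.ne_top_iff_exists.1 (hne j)
    have hg₀m : StrictMono g₀ := by
      intro i j hij
      have : g i < g j := hg hij
      rw [← hg₀, ← hg₀] at this
      exact WithTop.coe_lt_coe.1 this
    refine (H.eqTp_seq hg₀m hg').of_pointwise (fun p => .inl ⟨p, ?_, rfl⟩) fun _ hz => .inl hz
    simp [flat, withQ, ← hg₀]

/-- The cardinal bookkeeping behind all uses of homogeneity of the bigger monster: either it is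
small itself, or the smallness bound of `Mon` is below that of the bigger monster. -/
lemma MorleyCtx.auto (H : MorleyCtx T κ κ' emb A q a α) {X : Type} (hX : #X < κ)
    {u v : X → BigMon} (h : EqTp L (emb '' A) u v) :
    ∃ f : BigMon ≃ BigMon, IsAuto L f ∧ (∀ z ∈ emb '' A, f z = z) ∧ ∀ x, f (u x) = v x := by
  refine exists_auto H.bigMon h ?_
  by_cases hc : #Mon < κ
  · exact .inr ((mk_le_of_surjective
      (surjective_of_small H.mon H.bigMon.ec H.imm hc)).trans_lt H.size)
  · have hκ : κ < κ' := (not_lt.1 hc).trans_lt H.size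
    exact .inl ⟨hX.trans hκ, (mk_image_le.trans_lt H.cardA).trans hκ⟩

end PosLog

namespace PosLog

open FirstOrder Cardinal

variable {L : FirstOrder.Language.{0, 0}}

variable {T : Set (HSentence L)} {κ κ' : Cardinal} {Mon BigMon : Type}
  [L.Structure Mon] [L.Structure BigMon] {emb : Mon → BigMon} {A : Set Mon} {γ : Type}
  {q : γ → BigMon} {ι : Type} [LinearOrder ι] {a : ι → γ → Mon} {α : ι → γ → BigMon}

/-! ### Prolonging an initial segment of the Morley sequence -/

/-- The order `{d | d < i} + n`, as a subset of the lexicographic sum `ι + ω`. -/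
def extSet (i : ι) (n : ℕ) : Set (ι ⊕ₗ ℕ) :=
  {x | Sum.elim (fun d => d < i) (fun k => k < n) (ofLex x)}

@[simp] lemma inl_mem_extSet {i : ι} {n : ℕ} {d : ι} :
    (toLex (.inl d) : ι ⊕ₗ ℕ) ∈ extSet i n ↔ d < i := Iff.rfl

@[simp] lemma inr_mem_extSet {i : ι} {n k : ℕ} :
    (toLex (.inr k) : ι ⊕ₗ ℕ) ∈ extSet i n ↔ k < n := Iff.rfl

lemma extSet_mono (i : ι) {m n : ℕ} (h : m ≤ n) : extSet i m ⊆ extSet i n := by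
  intro x
  induction x using Lex.rec with
  | h x =>
    rcases x with d | k
    · exact id
    · exact fun hk => lt_of_lt_of_le hk h

/-- If infinitely many elements below `i` have only finitely many elements between them and `i`,
then these contain an infinite descending sequence, along which `{d | d < i} + n` embeds into
`{d | d < i}`. -/
lemma exists_shift {i : ι} (hE : {x | x < i ∧ (Set.Ioo x i).Finite}.Infinite) (n : ℕ) :
    ∃ w : ι ⊕ₗ ℕ → ι, StrictMonoOn w (extSet i n) := by
  classical
  let E : Set ι := {x | x < i ∧ (Set.Ioo x i).Finite}
  have hup : ∀ x ∈ E, ∀ y, x ≤ y → y < i → y ∈ E := fun x hx y hxy hy =>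
    ⟨hy, hx.2.subset (Set.Ioo_subset_Ioo_left hxy)⟩
  have : Nonempty E := hE.nonempty.to_subtype
  have : NoMinOrder E := by
    refine ⟨fun x => ?_⟩
    by_contra hcon
    push Not at hcon
    refine hE (((Set.finite_singleton x.1).union x.2.2).subset fun y hy => ?_)
    have hle : x.1 ≤ y := hcon ⟨y, hy⟩
    rcases hle.eq_or_lt with h | h
    · exact .inl h.symm
    · exact .inr ⟨h, hy.1⟩
  obtain ⟨e, he⟩ := Nat.exists_strictAnti E
  let r : ι → ℕ := fun x => (Set.Ioo x i).ncard
  have hr : ∀ x ∈ E, ∀ y, x < y → y < i → r y < r x := by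
    intro x hx y hxy hy
    refine Set.ncard_lt_ncard ⟨Set.Ioo_subset_Ioo_left hxy.le, fun h => ?_⟩ hx.2
    exact lt_irrefl y (h ⟨hxy, hy⟩).1
  have hlt : ∀ x, x < i → x ∉ E → ∀ k, x < (e k).1 := by
    intro x hx hxE k
    by_contra h
    exact hxE (hup _ (e k).2 x (not_lt.1 h) hx)
  refine ⟨fun x => Sum.elim (fun d => if d ∈ E then (e (r d + n)).1 else d)
    (fun j => (e (n - 1 - j)).1) (ofLex x), ?_⟩
  intro x hx y hy hxy
  induction x using Lex.rec with
  | h x =>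
  induction y using Lex.rec with
  | h y =>
  rcases x with d | j <;> rcases y with d' | j'
  · rw [Sum.Lex.inl_lt_inl_iff] at hxy
    rw [inl_mem_extSet] at hx hy
    by_cases hd : d ∈ E
    · have hd' := hup d hd d' hxy.le hy
      simp only [ofLex_toLex, Sum.elim_inl, hd, hd', if_true]
      exact he (Nat.add_lt_add_right (hr d hd d' hxy hy) n)
    · by_cases hd' : d' ∈ E
      · simp only [ofLex_toLex, Sum.elim_inl, hd, hd', if_true, if_false]
        exact hlt d hx hd _
      · simpa only [ofLex_toLex, Sum.elim_inl, hd, hd', if_false] using hxy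
  · rw [inl_mem_extSet] at hx
    rw [inr_mem_extSet] at hy
    by_cases hd : d ∈ E
    · simp only [ofLex_toLex, Sum.elim_inl, Sum.elim_inr, hd, if_true]
      exact he (by omega)
    · simp only [ofLex_toLex, Sum.elim_inl, Sum.elim_inr, hd, if_false]
      exact hlt d hx hd _
  · exact (Sum.Lex.not_inr_lt_inl hxy).elim
  · rw [Sum.Lex.inr_lt_inr_iff] at hxy
    rw [inr_mem_extSet] at hx hy
    simp only [ofLex_toLex, Sum.elim_inr]
    exact he (by omega)

/-- If only finitely many elements below `i` have finitely many elements between them and `i`, then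
the corresponding members of the sequence are replaced by members of the realisation `α` of the
tensor power, which also provides `n` further ones. Finite parts of the result are like finite parts
of the Morley sequence because there is enough room below `i`. -/
lemma MorleyCtx.exists_pSeqOn_of_finite (H : MorleyCtx T κ κ' emb A q a α) {i : ι}
    (hi : (Set.Iio i).Infinite) (hE : {x | x < i ∧ (Set.Ioo x i).Finite}.Finite) (n : ℕ) :
    ∃ s : ι ⊕ₗ ℕ → γ → BigMon,
      PSeqOn L (emb '' A) (fun i x => emb (a i x)) s (extSet i n) := by
  classical
  have : Infinite ι := Set.infinite_univ_iff.1 (hi.mono (Set.subset_univ _))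
  let E : Finset ι := hE.toFinset
  have hEmem : ∀ x, x ∈ E ↔ x < i ∧ (Set.Ioo x i).Finite := fun x => hE.mem_toFinset
  let m := E.card
  let p₀ : ι ⊕ₗ ℕ → ℕ := fun x =>
    Sum.elim (fun d => (E.filter (· < d)).card) (fun j => m + j) (ofLex x)
  let p : ι ⊕ₗ ℕ → Fin (m + n + 1) := fun x => ⟨min (p₀ x) (m + n), by omega⟩
  -- The part of `{d | d < i} + n` on which the sequence is taken from `α`.
  let V : Set (ι ⊕ₗ ℕ) := {x | Sum.elim (fun d => d ∈ E) (fun j => j < n) (ofLex x)}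
  have hp₀ : ∀ x ∈ V, p₀ x ≤ m + n := by
    intro x hx
    induction x using Lex.rec with
    | h x =>
    rcases x with d | j
    · exact (Finset.card_filter_le _ _).trans (Nat.le_add_right _ _)
    · have : j < n := hx
      simp only [p₀, ofLex_toLex, Sum.elim_inr]
      omega
  have hp₀m : StrictMonoOn p₀ V := by
    intro x hx y hy hxy
    induction x using Lex.rec with
    | h x =>
    induction y using Lex.rec with
    | h y =>
    have hlt : ∀ d ∈ E, ∀ s : Finset ι, E.filter (· < d) ⊆ s → d ∈ s →
        (E.filter (· < d)).card < s.card := by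
      intro d hd s hs hds
      refine Finset.card_lt_card ⟨hs, fun h => ?_⟩
      exact lt_irrefl d (Finset.mem_filter.1 (h hds)).2
    rcases x with d | j <;> rcases y with d' | j'
    · rw [Sum.Lex.inl_lt_inl_iff] at hxy
      refine hlt d hx _ (fun z hz => ?_) (Finset.mem_filter.2 ⟨hx, hxy⟩)
      obtain ⟨h₁, h₂⟩ := Finset.mem_filter.1 hz
      exact Finset.mem_filter.2 ⟨h₁, h₂.trans hxy⟩
    · exact (hlt d hx E (Finset.filter_subset _ _) hx).trans_le (Nat.le_add_right _ _)
    · exact (Sum.Lex.not_inr_lt_inl hxy).elim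
    · rw [Sum.Lex.inr_lt_inr_iff] at hxy
      exact Nat.add_lt_add_left hxy m
  have hpm : ∀ x ∈ V, ∀ y ∈ V, x < y → p x < p y := by
    intro x hx y hy hxy
    have h₁ := hp₀ x hx
    have h₂ := hp₀ y hy
    have h₃ := hp₀m hx hy hxy
    rw [Fin.lt_def]
    simp only [p]
    omega
  obtain ⟨g₀, hg₀⟩ := exists_strictMono_fin ι (m + n + 1)
  let s : ι ⊕ₗ ℕ → γ → BigMon := fun x t => if x ∈ V then α (g₀ (p x)) t else
    Sum.elim (fun d => emb (a d t)) (fun _ => q t) (ofLex x)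
  refine ⟨s, pSeqOn_of_local H.pSeqOn_univ fun S hS => ?_⟩
  have hinj : Function.Injective (fun d : ι => (toLex (Sum.inl d) : ι ⊕ₗ ℕ)) :=
    fun x y h => Sum.inl_injective (toLex.injective h)
  let S₀ : Finset ι := S.preimage (fun d => toLex (Sum.inl d)) hinj.injOn \ E
  have hS₀ : ∀ d, d ∈ S₀ ↔ (toLex (.inl d) : ι ⊕ₗ ℕ) ∈ S ∧ d ∉ E := fun d =>
    Finset.mem_sdiff.trans (and_congr_left' Finset.mem_preimage)
  have hS₀i : ∀ d ∈ S₀, d < i := fun d hd => hS ((hS₀ d).1 hd).1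
  -- There is room for `m + n + 1` members of the sequence between `S₀` and `i`.
  obtain ⟨y, hy, hyS⟩ : ∃ y : Fin (m + n + 1) → ι, StrictMono y ∧ ∀ d ∈ S₀, ∀ j, d < y j := by
    have hinf : {z | z < i ∧ ∀ d ∈ S₀, d < z}.Infinite := by
      rcases S₀.eq_empty_or_nonempty with h | h
      · have : {z | z < i ∧ ∀ d ∈ S₀, d < z} = Set.Iio i := by
          ext z
          simp [h]
        rw [this]
        exact hi
      · have hmax := S₀.max'_mem h
        have hnot : (Set.Ioo (S₀.max' h) i).Infinite := fun hf =>
          ((hS₀ _).1 hmax).2 ((hEmem _).2 ⟨hS₀i _ hmax, hf⟩)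
        exact hnot.mono fun z hz => ⟨hz.2, fun d hd => (S₀.le_max' d hd).trans_lt hz.1⟩
    obtain ⟨F, hF, hFc⟩ := hinf.exists_subset_card_eq (m + n + 1)
    exact ⟨F.orderEmbOfFin hFc, (F.orderEmbOfFin hFc).strictMono, fun d hd j =>
      (hF (F.orderEmbOfFin_mem hFc j)).2 d hd⟩
  have hnotV : ∀ x ∈ S, x ∉ V → ∃ d ∈ S₀, x = toLex (.inl d) := by
    intro x hx hxV
    induction x using Lex.rec with
    | h x =>
    rcases x with d | j
    · exact ⟨d, (hS₀ d).2 ⟨hx, hxV⟩, rfl⟩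
    · exact (hxV (hS hx)).elim
  refine ⟨fun x => if x ∈ V then y (p x) else Sum.elim id (fun _ => i) (ofLex x), ?_, ?_⟩
  · intro x hx x' hx' hxx'
    by_cases hV : x ∈ V <;> by_cases hV' : x' ∈ V
    · simp only [hV, hV', if_true]
      exact hy (hpm x hV x' hV' hxx')
    · -- `V` is an upper set in `{d | d < i} + n`.
      exfalso
      obtain ⟨d', hd', rfl⟩ := hnotV x' hx' hV'
      induction x using Lex.rec with
      | h x =>
      rcases x with d | j
      · rw [Sum.Lex.inl_lt_inl_iff] at hxx'
        have hdE : d ∈ E := hV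
        exact hV' ((hEmem d').2 ⟨hS₀i d' hd',
          ((hEmem d).1 hdE).2.subset (Set.Ioo_subset_Ioo_left hxx'.le)⟩)
      · exact Sum.Lex.not_inr_lt_inl hxx'
    · obtain ⟨d, hd, rfl⟩ := hnotV x hx hV
      simp only [hV, hV', if_true, if_false]
      exact hyS d hd _
    · obtain ⟨d, hd, rfl⟩ := hnotV x hx hV
      obtain ⟨d', hd', rfl⟩ := hnotV x' hx' hV'
      simp only [hV, hV', if_false]
      exact Sum.Lex.inl_lt_inl_iff.1 hxx'
  · refine (H.ls_tensor S₀ hy hg₀ hyS).eqTp.symm.of_pointwise ?_ ?_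
    · rintro ⟨⟨x, hx⟩, t⟩
      by_cases hV : x ∈ V
      · left
        exact ⟨(p x, t), by simp [flat, s, hV], by simp [flat, hV]⟩
      · right
        obtain ⟨d, hd, rfl⟩ := hnotV x hx hV
        refine ⟨by simp [flat, s, hV], a d t, .inr ?_, by simp [flat, s, hV]⟩
        simp only [Set.mem_iUnion]
        exact ⟨d, hd, t, rfl⟩
    · rintro _ ⟨z, hz, rfl⟩
      exact .inl ⟨z, .inl hz, rfl⟩

lemma MorleyCtx.exists_pSeqOn (H : MorleyCtx T κ κ' emb A q a α) {i : ι}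
    (hi : (Set.Iio i).Infinite) (n : ℕ) :
    ∃ s : ι ⊕ₗ ℕ → γ → BigMon,
      PSeqOn L (emb '' A) (fun i x => emb (a i x)) s (extSet i n) := by
  by_cases hE : {x | x < i ∧ (Set.Ioo x i).Finite}.Finite
  · exact H.exists_pSeqOn_of_finite hi hE n
  · obtain ⟨w, hw⟩ := exists_shift hE n
    exact ⟨_, H.pSeqOn_univ.comp hw fun _ _ => trivial⟩

lemma MorleyCtx.card_flat (H : MorleyCtx T κ κ' emb A q a α) (U : Set (ι ⊕ₗ ℕ)) :
    #(U × γ) < κ := by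
  rw [mk_prod, lift_id, lift_id]
  refine mul_lt_of_lt H.mon.aleph0_lt.le ((mk_set_le U).trans_lt ?_) H.cardγ
  have : #(ι ⊕ₗ ℕ) = #(ι ⊕ ℕ) := mk_congr ofLex
  rw [this, mk_sum, lift_id, lift_id]
  exact add_lt_of_lt H.mon.aleph0_lt.le H.cardι (by rw [mk_nat]; exact H.mon.aleph0_lt)

/-- By homogeneity, a sequence on `V ⊇ U` with the right finite types may be moved so as to agree
on `U` with a given one. -/
lemma MorleyCtx.exists_move [Infinite ι] (H : MorleyCtx T κ κ' emb A q a α)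
    {s s' : ι ⊕ₗ ℕ → γ → BigMon} {U V : Set (ι ⊕ₗ ℕ)} (hUV : U ⊆ V)
    (hs : PSeqOn L (emb '' A) (fun i x => emb (a i x)) s U)
    (hs' : PSeqOn L (emb '' A) (fun i x => emb (a i x)) s' V) :
    ∃ t, PSeqOn L (emb '' A) (fun i x => emb (a i x)) t V ∧ ∀ x ∈ U, t x = s x := by
  obtain ⟨f, hf, hfA, hfs⟩ := H.auto (H.card_flat U) ((hs'.mono hUV).eqTp hs)
  exact ⟨_, hs'.auto hf hfA, fun x hx => funext fun y => hfs (⟨x, hx⟩, y)⟩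

/-- A coherent choice of prolongations by `n = 0, 1, 2, …` members yields a prolongation by an
`ω`-sequence. -/
lemma MorleyCtx.exists_pSeqOn_omega [Infinite ι] (H : MorleyCtx T κ κ' emb A q a α) {i : ι}
    (hi : (Set.Iio i).Infinite) :
    ∃ s : ι ⊕ₗ ℕ → γ → BigMon,
      PSeqOn L (emb '' A) (fun i x => emb (a i x)) s (⋃ n, extSet i n) := by
  classical
  let P : ℕ → (ι ⊕ₗ ℕ → γ → BigMon) → Prop := fun n s =>
    PSeqOn L (emb '' A) (fun i x => emb (a i x)) s (extSet i n)
  have step : ∀ n, ∀ s : {s // P n s}, ∃ s' : {s // P (n + 1) s},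
      ∀ x ∈ extSet i n, s'.1 x = s.1 x := by
    intro n s
    obtain ⟨s', hs'⟩ := H.exists_pSeqOn hi (n + 1)
    obtain ⟨t, ht, hts⟩ := H.exists_move (extSet_mono i n.le_succ) s.2 hs'
    exact ⟨⟨t, ht⟩, hts⟩
  choose nxt hnxt using step
  obtain ⟨s₀, hs₀⟩ := H.exists_pSeqOn hi 0
  let F : ∀ n, {s // P n s} := fun n => Nat.rec ⟨s₀, hs₀⟩ nxt n
  have hF : ∀ n m, n ≤ m → ∀ x ∈ extSet i n, (F m).1 x = (F n).1 x := by
    intro n m hnm x hx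
    induction m, hnm using Nat.le_induction with
    | base => rfl
    | succ m hnm ih => exact (hnxt m (F m) x (extSet_mono i hnm hx)).trans ih
  let t : ι ⊕ₗ ℕ → γ → BigMon := fun x =>
    (F (Sum.elim (fun _ => 0) (fun k => k + 1) (ofLex x))).1 x
  have ht : ∀ n, ∀ x ∈ extSet i n, t x = (F n).1 x := by
    intro n x hx
    induction x using Lex.rec with
    | h x =>
    rcases x with d | k
    · exact (hF 0 n (Nat.zero_le n) _ hx).symm
    · exact (hF (k + 1) n hx _ (Nat.lt_succ_self k)).symm
  refine ⟨t, fun n g g' hg hgU hgb => ?_⟩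
  choose N hN using fun k => Set.mem_iUnion.1 (hgU k)
  have hle : ∀ k, N k ≤ ∑ k, N k := fun k =>
    Finset.single_le_sum (f := N) (fun _ _ => Nat.zero_le _) (Finset.mem_univ k)
  exact (((F (∑ k, N k)).2).congr (ht _)) n g g' hg (fun k => extSet_mono i (hle k) (hN k)) hgb

/-- The main case of the first assertion. The initial segment `a_{<i}` is prolonged by an
`ω`-sequence beginning with `a_i` and `q`, which is then indiscernible over `A a_{<i}`. -/
lemma MorleyCtx.ls_infinite (H : MorleyCtx T κ κ' emb A q a α) {i : ι}
    (hi : (Set.Iio i).Infinite) :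
    LsEq L (emb '' (A ∪ ⋃ (j : ι) (_ : j < i), Set.range (a j))) (fun x => emb (a i x)) q := by
  have : Infinite ι := Set.infinite_univ_iff.1 (hi.mono (Set.subset_univ _))
  obtain ⟨s', hs'⟩ := H.exists_pSeqOn_omega hi
  let w : ι ⊕ₗ ℕ → WithTop ι := fun x =>
    Sum.elim (fun d : ι => (d : WithTop ι)) (fun k => if k = 0 then (i : WithTop ι) else ⊤) (ofLex x)
  have hw : StrictMonoOn w (extSet i 2) := by
    intro x hx y hy hxy
    induction x using Lex.rec with
    | h x =>
    induction y using Lex.rec with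
    | h y =>
    rcases x with d | j <;> rcases y with d' | j'
    · rw [Sum.Lex.inl_lt_inl_iff] at hxy
      exact WithTop.coe_lt_coe.2 hxy
    · rw [inl_mem_extSet] at hx
      have hdi : (d : WithTop ι) < i := WithTop.coe_lt_coe.2 hx
      by_cases hj : j' = 0
      · simpa [w, hj] using hdi
      · simp [w, hj]
    · exact (Sum.Lex.not_inr_lt_inl hxy).elim
    · rw [Sum.Lex.inr_lt_inr_iff] at hxy
      rw [inr_mem_extSet] at hy
      have h₁ : j = 0 := by omega
      have h₂ : j' ≠ 0 := by omega
      simp [w, h₁, h₂]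
  obtain ⟨t, ht, hts⟩ := H.exists_move (Set.subset_iUnion (extSet i) 2)
    (H.pSeqOn_withQ.comp hw fun _ _ => trivial) hs'
  have ht₀ : t (toLex (.inr 0)) = fun x => emb (a i x) := by
    rw [hts _ (by simp)]
    ext x
    simp [w, withQ]
  have ht₁ : t (toLex (.inr 1)) = q := by
    rw [hts _ (by simp)]
    ext x
    simp [w, withQ]
  have htd : ∀ d < i, ∀ x, t (toLex (.inl d)) x = emb (a d x) := by
    intro d hd x
    rw [hts _ (by simpa using hd)]
    simp [w, withQ]
  refine Relation.ReflTransGen.single ⟨fun k => t (toLex (.inr k)), ?_, .inl ⟨ht₀, ht₁⟩⟩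
  intro n f g hf hg
  -- Both sequences, preceded by `a_{<i}`, have the order type `{d | d < i} + n`.
  let W : (Fin n → ℕ) → Set.Iio i ⊕ₗ Fin n → ι ⊕ₗ ℕ := fun f x =>
    toLex (Sum.map Subtype.val f (ofLex x))
  have hW : ∀ f, StrictMono f → StrictMonoOn (W f) Set.univ := by
    intro f hf x _ y _ hxy
    induction x using Lex.rec with
    | h x =>
    induction y using Lex.rec with
    | h y =>
    rcases x with d | j <;> rcases y with d' | j'
    · have h : d < d' := Sum.Lex.inl_lt_inl_iff.1 hxy
      exact Sum.Lex.inl_lt_inl_iff.2 h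
    · exact Sum.Lex.inl_lt_inr _ _
    · exact (Sum.Lex.not_inr_lt_inl hxy).elim
    · have h : j < j' := Sum.Lex.inr_lt_inr_iff.1 hxy
      exact Sum.Lex.inr_lt_inr_iff.2 (hf h)
  have hWU : ∀ f, ∀ x ∈ Set.univ, W f x ∈ ⋃ n, extSet i n := by
    intro f x _
    induction x using Lex.rec with
    | h x =>
    rcases x with d | j
    · exact Set.mem_iUnion.2 ⟨0, d.2⟩
    · exact Set.mem_iUnion.2 ⟨f j + 1, Nat.lt_succ_self _⟩
  have key := (ht.comp (hW f hf) (hWU f)).eqTp (ht.comp (hW g hg) (hWU g))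
  refine key.of_pointwise (fun y => .inl ⟨(⟨toLex (.inr y.1), trivial⟩, y.2), rfl, rfl⟩) ?_
  rintro _ ⟨z, hz | hz, rfl⟩
  · exact .inl ⟨z, hz, rfl⟩
  · simp only [Set.mem_iUnion] at hz
    obtain ⟨d, hd, x, rfl⟩ := hz
    exact .inr ⟨(⟨toLex (.inl ⟨d, hd⟩), trivial⟩, x), htd d hd x, htd d hd x⟩

lemma MorleyCtx.ls_all (H : MorleyCtx T κ κ' emb A q a α) (i : ι) :
    LsEq L (emb '' (A ∪ ⋃ (j : ι) (_ : j < i), Set.range (a j))) (fun x => emb (a i x)) q := by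
  by_cases hi : (Set.Iio i).Finite
  · have := H.ls_finite hi.toFinset i (by simp)
    simpa using this
  · exact H.ls_infinite hi

/-- Realisations of the same global type are conjugate over `Mon`, and conjugation over `Mon`
preserves Lascar strong types over subsets of `Mon`. -/
lemma MorleyCtx.ls_all_of_eqTp (H : MorleyCtx T κ κ' emb A q a α) (i : ι) {β : γ → BigMon}
    (hβ : EqTp L (Set.range emb) β q) :
    LsEq L (emb '' (A ∪ ⋃ (j : ι) (_ : j < i), Set.range (a j))) (fun x => emb (a i x)) β := by
  obtain ⟨f, hf, hfA, hfq⟩ := exists_auto H.bigMon hβ.symm (by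
    by_cases hc : #Mon < κ
    · exact .inr ((mk_le_of_surjective
        (surjective_of_small H.mon H.bigMon.ec H.imm hc)).trans_lt H.size)
    · exact .inl ⟨H.cardγ.trans ((not_lt.1 hc).trans_lt H.size), mk_range_le.trans_lt H.size⟩)
  have := (H.ls_all i).auto hf fun z hz => hfA z (Set.image_subset_range _ _ hz)
  simpa only [hfq, fun z => hfA (emb z) ⟨z, rfl⟩] using this

end PosLog

namespace PosLog

/-- **Basic properties of Morley sequences in a global Lascar-invariant
type** (Dobrowolski–Kamsma, Proposition 3.31).  Let `T` be a thick positive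
theory and `q` a global `A`-Lascar-invariant type.  For any Morley sequence
`(a_i)_{i<δ}` in `q` over `A`:
(i) for all `i < δ`, `a_i ≡^Ls_{A a_{<i}} α`, where `α ⊨ q`;
(ii) `(a_i)_{i<δ}` is `A`-indiscernible. -/
theorem morley_sequence_properties
    {L : FirstOrder.Language.{0, 0}} (T : Set (HSentence L)) (κ κ' : Cardinal)
    (Mon BigMon : Type) [L.Structure Mon] [L.Structure BigMon]
    (emb : Mon → BigMon)
    (hJEP : HasJEP T)
    (hMon : IsMonster T κ Mon) (hBigMon : IsMonster T κ' BigMon)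
    (hemb : IsImmersionMap L emb) (hsize : #Mon < κ')
    (hthick : IsThick L κ Mon) (hthick' : IsThick L κ' BigMon)
    (A : Set Mon) (hA : #(↥A) < κ)
    {γ : Type} (hγ : #γ < κ)
    (q : γ → BigMon) (hq : LsInvariantOver L κ emb A q)
    {ι : Type} [LinearOrder ι] (hι : #ι < κ)
    (a : ι → γ → Mon) (hMor : IsMorleyIn L κ emb A q a) :
    (∀ i : ι, ∀ α : γ → BigMon, EqTp L (Set.range emb) α q →
      LsEq L (emb '' (A ∪ ⋃ (j : ι) (_ : j < i), Set.range (a j)))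
        (fun x => emb (a i x)) α) ∧
    Indisc L A a := by
  obtain ⟨α, hα, hT⟩ := hMor
  have H : MorleyCtx T κ κ' emb A q a α := ⟨hMon, hBigMon, hemb, hsize, hA, hγ, hq, hι, hα, hT⟩
  exact ⟨fun i β hβ => H.ls_all_of_eqTp i hβ, H.indisc⟩

end PosLog
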